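/- arXiv:2311.08020 — 4 statements merged into one kernel-verified Lean document; each statement's English description precedes it below -/
import Mathlib

section
/- For the plethystic substitution f ↦ f[(q-1)x] defined on symmetric functions by p_k[(q-1)x] = (q^k - 1)p_k, the elementary symmetric function satisfies e_n[(q-1)x]/(q-1) = Σ_{α ⊨ n} (-1)^{ℓ(α)-1} [α_1]_q e_{sort(α)}, summing over compositions α of n. -/
/- We model the ring of symmetric functions over `ℚ[q]` as the polynomial ring
`Λ = ℚ[q][p_1, p_2, …]` in the power sums, which are algebraically independent:
the variable `X k` of `MvPolynomial ℕ (Polynomial ℚ)` stands for `p_{k+1}`. -/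
noncomputable abbrev Lam : Type := MvPolynomial ℕ (Polynomial ℚ)

/-- The power sum `p_λ` for a partition `λ`. -/
noncomputable def pProd {m : ℕ} (μ : Nat.Partition m) : Lam :=
  (μ.parts.map (fun k => MvPolynomial.X (k - 1))).prod

/-- `z_λ = ∏ i^{m_i} m_i!`. -/
noncomputable def zPart {m : ℕ} (μ : Nat.Partition m) : ℕ :=
  μ.parts.prod * ∏ i ∈ μ.parts.toFinset, (μ.parts.count i).factorial

/-- The elementary symmetric function `e_m = Σ_{λ ⊢ m} (-1)^{m-ℓ(λ)} z_λ⁻¹ p_λ`,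
expressed in the power sum basis. -/
noncomputable def E (m : ℕ) : Lam :=
  ∑ μ : Nat.Partition m,
    MvPolynomial.C (Polynomial.C ((-1 : ℚ) ^ (m - Multiset.card μ.parts) / zPart μ)) * pProd μ

/-- The q-integer `[m]_q` over `ℚ`. -/
noncomputable def qintQ (m : ℕ) : Polynomial ℚ := ∑ i ∈ Finset.range m, Polynomial.X ^ i

/-- The power series `∏ i ≥ 1, exp (a i * X ^ i)`, expanded as a sum over partitions. -/
noncomputable def expGenFun {R : Type*} [CommRing R] [Algebra ℚ R] (a : ℕ → R) : PowerSeries R :=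
  Nat.Partition.genFun fun i c => a i ^ c * algebraMap ℚ R (1 / c.factorial)

section ExpGenFun

open PowerSeries
open scoped PowerSeries.WithPiTopology

variable {R : Type*} [CommRing R] [Algebra ℚ R]

theorem one_add_tsum_eq_expand_rescale_exp [TopologicalSpace R] [T2Space R] (r : R) (i : ℕ) :
    (1 : PowerSeries R) + ∑' j, (r ^ (j + 1) * algebraMap ℚ R (1 / (j + 1).factorial)) •
      (X : PowerSeries R) ^ ((i + 1) * (j + 1)) =
    expand (i + 1) i.succ_ne_zero (rescale r (exp R)) := by
  have hs := Nat.Partition.summable_genFun_term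
    (fun _ c => r ^ c * algebraMap ℚ R (1 / c.factorial)) i
  ext d
  rw [map_add, hs.map_tsum _ (WithPiTopology.continuous_coeff R d)]
  simp only [coeff_smul, coeff_X_pow]
  by_cases hd : (i + 1) ∣ d
  · obtain ⟨m, rfl⟩ := hd
    rw [coeff_expand_mul, coeff_rescale, coeff_exp]
    rcases m with _ | m
    · simp
    · rw [tsum_eq_single m]
      · simp [coeff_one]
      · intro b hb
        simp [Ne.symm hb]
  · rw [coeff_expand_of_not_dvd _ _ _ hd]
    have h0 : d ≠ 0 := by rintro rfl; simp at hd
    have h1 : ∀ j, d ≠ (i + 1) * (j + 1) := by rintro j rfl; simp at hd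
    simp [coeff_one, h0, h1]

theorem expGenFun_mul (a b : ℕ → R) :
    expGenFun a * expGenFun b = expGenFun (a + b) := by
  let _ : TopologicalSpace R := ⊥
  have _ : DiscreteTopology R := ⟨rfl⟩
  have key (a : ℕ → R) : HasProd (fun i => expand (i + 1) i.succ_ne_zero
      (rescale (a (i + 1)) (exp R))) (expGenFun a) := by
    convert! Nat.Partition.hasProd_genFun
      (fun i c => a i ^ c * algebraMap ℚ R (1 / c.factorial)) using 2 with i
    exact (one_add_tsum_eq_expand_rescale_exp _ i).symm
  refine ((key a).mul (key b)).unique ?_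
  convert! key (a + b) using 2 with i
  rw [← map_mul, exp_mul_exp_eq_exp_add, Pi.add_apply]

theorem rescale_expGenFun (r : R) (a : ℕ → R) :
    rescale r (expGenFun a) = expGenFun fun i => r ^ i * a i := by
  ext n
  simp only [expGenFun, coeff_rescale, Nat.Partition.coeff_genFun, Finset.mul_sum]
  refine Finset.sum_congr rfl fun p _ => ?_
  have hp : r ^ n = p.parts.toFinsupp.prod fun i c => (r ^ i) ^ c := by
    simp only [Finsupp.prod, Multiset.toFinsupp_support, Multiset.toFinsupp_apply]
    rw [← Finset.prod_multiset_map_count]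
    conv_lhs => rw [← p.parts_sum]
    generalize p.parts = s
    induction s using Multiset.induction_on with
    | empty => simp
    | cons a s ih => simp [pow_add, ih]
  rw [hp, ← Finsupp.prod_mul]
  simp only [mul_pow, mul_assoc]

theorem map_expGenFun {S : Type*} [CommRing S] [Algebra ℚ S] (φ : R →+* S) (a : ℕ → R) :
    PowerSeries.map φ (expGenFun a) = expGenFun fun i => φ (a i) := by
  ext n
  simp only [expGenFun, coeff_map, Nat.Partition.coeff_genFun, map_sum, map_finsuppProd, map_mul,
    map_pow, RingHom.map_rat_algebraMap]

end ExpGenFun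

theorem Composition.sum_succ_eq_sum_antidiagonal {M : Type*} [AddCommMonoid M] (n : ℕ)
    (F : List ℕ → M) :
    ∑ α : Composition (n + 1), F α.blocks =
      ∑ ij ∈ Finset.HasAntidiagonal.antidiagonal n,
        ∑ β : Composition ij.2, F ((ij.1 + 1) :: β.blocks) := by
  rw [Finset.sum_sigma']
  symm
  refine Finset.sum_bij (fun x hx => ⟨(x.1.1 + 1) :: x.2.blocks, ?_, ?_⟩) ?_ ?_ ?_ ?_
  · intro i hi
    rcases List.mem_cons.1 hi with rfl | hi
    · omega
    · exact x.2.blocks_pos hi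
  · have := x.2.blocks_sum
    simp [Finset.HasAntidiagonal.mem_antidiagonal] at hx
    simp
    omega
  · simp
  · rintro ⟨⟨i, j⟩, β⟩ hx ⟨⟨i', j'⟩, β'⟩ hx' h
    simp only [Composition.mk.injEq, List.cons.injEq, Nat.add_right_cancel_iff] at h
    obtain ⟨rfl, h⟩ := h
    simp only [Finset.mem_sigma, Finset.HasAntidiagonal.mem_antidiagonal, Finset.mem_univ,
      and_true] at hx hx'
    obtain rfl : j = j' := by omega
    obtain rfl : β = β' := Composition.ext h
    rfl
  · rintro ⟨l, hl, hs⟩ -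
    rcases l with _ | ⟨k, l⟩
    · simp at hs
    · have hk : 0 < k := hl (by simp)
      simp only [List.sum_cons] at hs
      refine ⟨⟨(k - 1, l.sum), ⟨l, fun hi => hl (List.mem_cons_of_mem _ hi), rfl⟩⟩, ?_, ?_⟩
      · simp [Finset.HasAntidiagonal.mem_antidiagonal]
        omega
      · simp [Nat.sub_add_cancel hk]
  · simp

/-- The alternating sum of `∏ f α_i` over compositions `α` of `n`. -/
noncomputable def altCompSum {R : Type*} [CommRing R] (f : ℕ → R) (n : ℕ) : R :=
  ∑ α : Composition n, (-1 : R) ^ α.blocks.length * (α.blocks.map f).prod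

theorem altCompSum_zero {R : Type*} [CommRing R] (f : ℕ → R) : altCompSum f 0 = 1 := by
  have h (α : Composition 0) : α.blocks = [] := α.blocks_eq_nil.2 rfl
  simp [altCompSum, h, composition_card]

theorem altCompSum_succ {R : Type*} [CommRing R] (f : ℕ → R) (n : ℕ) :
    altCompSum f (n + 1) =
      -∑ ij ∈ Finset.HasAntidiagonal.antidiagonal n, f (ij.1 + 1) * altCompSum f ij.2 := by
  rw [altCompSum, Composition.sum_succ_eq_sum_antidiagonal n
    fun l => (-1 : R) ^ l.length * (l.map f).prod, ← Finset.sum_neg_distrib]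
  refine Finset.sum_congr rfl fun ij _ => ?_
  rw [altCompSum, Finset.mul_sum, ← Finset.sum_neg_distrib]
  refine Finset.sum_congr rfl fun β _ => ?_
  simp only [List.length_cons, List.map_cons, List.prod_cons]
  ring

theorem mk_mul_mk_altCompSum {R : Type*} [CommRing R] (f : ℕ → R) (hf : f 0 = 1) :
    PowerSeries.mk f * PowerSeries.mk (altCompSum f) = 1 := by
  ext n
  rw [PowerSeries.coeff_mul]
  rcases n with _ | n
  · simp [hf, altCompSum_zero]
  · rw [Finset.Nat.antidiagonal_succ, Finset.sum_cons, Finset.sum_map]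
    simp [hf, altCompSum_succ, PowerSeries.coeff_one]

/-- The coefficients `(-1) ^ (i - 1) * p_i / i` of the logarithm of `∑ e_n t ^ n`. -/
noncomputable def logE (i : ℕ) : Lam :=
  algebraMap ℚ Lam ((-1) ^ (i - 1) / i) * MvPolynomial.X (i - 1)

theorem sum_map_pred_add_card (s : Multiset ℕ) (hs : ∀ i ∈ s, 0 < i) :
    (s.map fun i => i - 1).sum + Multiset.card s = s.sum := by
  induction s using Multiset.induction_on with
  | empty => simp
  | cons a s ih =>
    have ha := hs a (Multiset.mem_cons_self a s)
    have := ih fun i hi => hs i (Multiset.mem_cons_of_mem hi)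
    simp only [Multiset.map_cons, Multiset.sum_cons, Multiset.card_cons]
    omega

theorem neg_one_pow_sub_card_div_zPart {n : ℕ} (μ : Nat.Partition n) :
    (-1 : ℚ) ^ (n - Multiset.card μ.parts) / zPart μ =
      ∏ i ∈ μ.parts.toFinset, (((-1) ^ (i - 1) / i) ^ μ.parts.count i *
        (1 / (μ.parts.count i).factorial) : ℚ) := by
  have hsum := sum_map_pred_add_card μ.parts fun i hi => μ.parts_pos hi
  rw [μ.parts_sum] at hsum
  have hexp : (μ.parts.map fun i => i - 1).sum = n - Multiset.card μ.parts := by omega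
  have hsign : (-1 : ℚ) ^ (n - Multiset.card μ.parts) =
      ∏ i ∈ μ.parts.toFinset, ((-1 : ℚ) ^ (i - 1)) ^ μ.parts.count i := by
    rw [← Finset.prod_multiset_map_count, ← hexp]
    generalize μ.parts = s
    induction s using Multiset.induction_on with
    | empty => simp
    | cons a s ih => simp [pow_add, ih]
  rw [hsign, zPart, Finset.prod_multiset_count μ.parts]
  push_cast
  rw [← Finset.prod_mul_distrib, ← Finset.prod_div_distrib]
  refine Finset.prod_congr rfl fun i _ => ?_
  rw [div_pow, div_mul_div_comm, mul_one]

theorem mk_E_eq_expGenFun : PowerSeries.mk E = expGenFun logE := by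
  ext1 n
  simp only [expGenFun, PowerSeries.coeff_mk, Nat.Partition.coeff_genFun, E]
  refine Finset.sum_congr rfl fun μ _ => ?_
  have hC (r : ℚ) : (MvPolynomial.C (Polynomial.C r) : Lam) = algebraMap ℚ Lam r := rfl
  rw [hC, neg_one_pow_sub_card_div_zPart, pProd, Finset.prod_multiset_map_count, map_prod,
    ← Finset.prod_mul_distrib]
  simp only [Finsupp.prod, Multiset.toFinsupp_support, Multiset.toFinsupp_apply, logE]
  refine Finset.prod_congr rfl fun i _ => ?_
  rw [map_mul, map_pow]
  ring

theorem E_zero : E 0 = 1 := by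
  simp [E, pProd, zPart]

/-- for the plethystic substitution `f ↦ f[(q-1)x]`, i.e. the `ℚ[q]`-algebra
homomorphism `Φ` on symmetric functions determined by `p_k ↦ (q^k - 1) p_k`, one has
`e_n[(q-1)x]/(q-1) = Σ_{α ⊨ n} (-1)^{ℓ(α)-1} [α_1]_q e_{sort(α)}` (with the denominator
cleared), summing over compositions `α` of `n`. -/
theorem pleth_esymm_qsub1 (n : ℕ) (hn : 1 ≤ n) (Φ : Lam →ₐ[Polynomial ℚ] Lam)
    (hΦ : ∀ k : ℕ, Φ (MvPolynomial.X k) =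
      MvPolynomial.C (Polynomial.X ^ (k + 1) - 1) * MvPolynomial.X k) :
    Φ (E n) = MvPolynomial.C (Polynomial.X - 1) *
      ∑ α : Composition n, (-1 : Lam) ^ (α.length - 1) *
        MvPolynomial.C (qintQ α.blocks.headI) * (α.blocks.map E).prod := by
  have hΦ' : PowerSeries.map (Φ : Lam →+* Lam) (PowerSeries.mk E) * PowerSeries.mk E =
      PowerSeries.rescale (MvPolynomial.C Polynomial.X : Lam) (PowerSeries.mk E) := by
    rw [mk_E_eq_expGenFun, map_expGenFun, rescale_expGenFun, expGenFun_mul]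
    congr 1
    funext i
    rcases i with _ | i
    · simp [logE]
    · simp only [Pi.add_apply, logE, RingHom.coe_coe, map_mul, Nat.add_sub_cancel, hΦ,
        AlgHom.map_algebraMap, map_sub, map_pow, map_one]
      ring
  have hinv := mk_mul_mk_altCompSum E E_zero
  have hquot : PowerSeries.map (Φ : Lam →+* Lam) (PowerSeries.mk E) - 1 =
      (PowerSeries.rescale (MvPolynomial.C Polynomial.X : Lam) (PowerSeries.mk E) -
        PowerSeries.mk E) * PowerSeries.mk (altCompSum E) := by
    rw [sub_mul, ← hΦ', mul_assoc, hinv, mul_one]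
  obtain ⟨n, rfl⟩ := Nat.exists_eq_add_one_of_ne_zero (Nat.one_le_iff_ne_zero.1 hn)
  have hcoeff := congrArg (PowerSeries.coeff (n + 1)) hquot
  rw [PowerSeries.coeff_mul, Finset.Nat.antidiagonal_succ, Finset.sum_cons,
    Finset.sum_map] at hcoeff
  simp [PowerSeries.coeff_one] at hcoeff
  rw [← PowerSeries.coeff_zero_eq_constantCoeff_apply, PowerSeries.coeff_rescale,
    PowerSeries.coeff_mk, pow_zero, one_mul, sub_self, zero_mul, zero_add] at hcoeff
  rw [hcoeff]
  simp only [← Composition.blocks_length]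
  rw [Composition.sum_succ_eq_sum_antidiagonal n fun l => (-1 : Lam) ^ (l.length - 1) *
        MvPolynomial.C (qintQ l.headI) * (l.map E).prod, Finset.mul_sum]
  refine Finset.sum_congr rfl fun ij _ => ?_
  have hq : (MvPolynomial.C (Polynomial.X - 1) : Lam) * MvPolynomial.C (qintQ (ij.1 + 1)) =
      MvPolynomial.C Polynomial.X ^ (ij.1 + 1) - 1 := by
    rw [← map_mul, qintQ, mul_geom_sum, map_sub, map_pow, map_one]
  simp only [altCompSum, Finset.mul_sum]
  refine Finset.sum_congr rfl fun β _ => ?_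
  simp only [List.length_cons, List.map_cons, List.prod_cons, List.headI_cons,
    Nat.add_sub_cancel]
  linear_combination (-(-1 : Lam) ^ β.blocks.length * E (ij.1 + 1) * (β.blocks.map E).prod) * hq
end

section
/- For a natural unit interval graph G = ([n],E), the coefficient of e_n in the elementary symmetric function expansion of X_G(x;q) equals [n]_q · [b_2]_q [b_3]_q ··· [b_n]_q, where b_i is the number of neighbours j < i of vertex i in G. -/
noncomputable def qint (m : ℕ) : Polynomial ℤ := ∑ i ∈ Finset.range m, Polynomial.X ^ i

/-- `G` is a natural unit interval graph. -/
def IsNUIG {n : ℕ} (G : SimpleGraph (Fin n)) : Prop :=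
  ∀ i j k : Fin n, i < j → j < k → G.Adj i k → G.Adj i j ∧ G.Adj j k

/-- The number of ascents of a colouring. -/
noncomputable def ascNum {n : ℕ} (G : SimpleGraph (Fin n)) {N : ℕ} (κ : Fin n → Fin N) : ℕ :=
  Nat.card {p : Fin n × Fin n // p.1 < p.2 ∧ G.Adj p.1 p.2 ∧ κ p.1 < κ p.2}

/-- The chromatic quasisymmetric function `X_G(x;q)` in the variables `x_1, …, x_N`. -/
noncomputable def cqf {n : ℕ} (G : SimpleGraph (Fin n)) (N : ℕ) :
    MvPolynomial (Fin N) (Polynomial ℤ) :=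
  ∑ᶠ (κ : Fin n → Fin N) (_ : ∀ i j, G.Adj i j → κ i ≠ κ j),
    MvPolynomial.C (Polynomial.X ^ ascNum G κ) * ∏ i, MvPolynomial.X (κ i)

/-- `b_i`: the number of neighbours of `i` smaller than `i`. -/
noncomputable def bG {n : ℕ} (G : SimpleGraph (Fin n)) (i : Fin n) : ℕ :=
  Nat.card {j : Fin n // j < i ∧ G.Adj j i}

theorem isNUIG_comap {m n : ℕ} {G : SimpleGraph (Fin n)} (hG : IsNUIG G)
    {f : Fin m → Fin n} (hf : StrictMono f) : IsNUIG (G.comap f) :=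
  fun _ _ _ hij hjk h => hG _ _ _ (hf hij) (hf hjk) h

/-- The number of neighbours of `i` larger than `i`. -/
noncomputable def upDegree {n : ℕ} (G : SimpleGraph (Fin n)) (i : Fin n) : ℕ :=
  Nat.card {j : Fin n // i < j ∧ G.Adj i j}

section

open Classical

theorem bG_eq_sum {n : ℕ} (G : SimpleGraph (Fin n)) (i : Fin n) :
    bG G i = ∑ j, if j < i ∧ G.Adj j i then 1 else 0 := by
  simp [bG, Nat.card_eq_fintype_card, Fintype.card_subtype]

theorem upDegree_eq_sum {n : ℕ} (G : SimpleGraph (Fin n)) (i : Fin n) :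
    upDegree G i = ∑ j, if i < j ∧ G.Adj i j then 1 else 0 := by
  simp [upDegree, Nat.card_eq_fintype_card, Fintype.card_subtype]

theorem bG_last {n : ℕ} (G : SimpleGraph (Fin (n + 1))) :
    bG G (Fin.last n) = ∑ j : Fin n, if G.Adj j.castSucc (Fin.last n) then 1 else 0 := by
  rw [bG_eq_sum, Fin.sum_univ_castSucc]
  simp [Fin.castSucc_lt_last]

theorem bG_castSucc {n : ℕ} (G : SimpleGraph (Fin (n + 1))) (i : Fin n) :
    bG G i.castSucc = bG (G.comap Fin.castSucc) i := by
  rw [bG_eq_sum, bG_eq_sum, Fin.sum_univ_castSucc]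
  simp [not_lt_of_ge (Fin.le_last _)]

theorem upDegree_zero {n : ℕ} (G : SimpleGraph (Fin (n + 1))) :
    upDegree G 0 = ∑ j : Fin n, if G.Adj 0 j.succ then 1 else 0 := by
  rw [upDegree_eq_sum, Fin.sum_univ_succ]
  simp

theorem upDegree_succ {n : ℕ} (G : SimpleGraph (Fin (n + 1))) (i : Fin n) :
    upDegree G i.succ = upDegree (G.comap Fin.succ) i := by
  rw [upDegree_eq_sum, upDegree_eq_sum, Fin.sum_univ_succ]
  simp

theorem upDegree_castSucc {n : ℕ} (G : SimpleGraph (Fin (n + 1))) (i : Fin n) :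
    upDegree G i.castSucc = upDegree (G.comap Fin.castSucc) i +
      if G.Adj i.castSucc (Fin.last n) then 1 else 0 := by
  rw [upDegree_eq_sum, upDegree_eq_sum, Fin.sum_univ_castSucc]
  simp [Fin.castSucc_lt_last]

theorem upDegree_last {n : ℕ} (G : SimpleGraph (Fin (n + 1))) : upDegree G (Fin.last n) = 0 := by
  simp [upDegree_eq_sum, not_lt_of_ge (Fin.le_last _)]

theorem prod_range_shift {M : Type*} [CommMonoid M] (Q : ℕ → M) (u : ℕ → ℕ) {a n : ℕ}
    (han : a ≤ n) (hu : ∀ i, a ≤ i → i ≤ n → u i = n - i) :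
    ∏ i ∈ Finset.range (n + 1), Q (u i + if a ≤ i then 1 else 0) =
      (∏ i ∈ Finset.range n, Q (u i)) * Q (n + 1 - a) := by
  obtain ⟨b, rfl⟩ := Nat.exists_eq_add_of_le han
  rw [add_assoc, Finset.prod_range_add _ a (b + 1), Finset.prod_range_add _ a b,
    Finset.prod_range_succ' _ b, mul_assoc]
  congr 1
  · refine Finset.prod_congr rfl fun i hi => ?_
    rw [if_neg (by simpa using hi), add_zero]
  · congr 1
    · refine Finset.prod_congr rfl fun i hi => ?_
      have := Finset.mem_range.1 hi
      rw [hu _ (by omega) (by omega), hu _ (by omega) (by omega), if_pos (by omega)]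
      congr 1
      omega
    · rw [hu _ (by omega) (by omega), if_pos (by omega)]
      congr 1
      omega

theorem prod_qint_upDegree {n : ℕ} (G : SimpleGraph (Fin (n + 1))) (hG : IsNUIG G) :
    ∏ i : Fin n, qint (upDegree G i.castSucc) = ∏ i : Fin n, qint (bG G i.succ) := by
  induction n with
  | zero => simp
  | succ n ih =>
    have hG' := isNUIG_comap hG Fin.strictMono_castSucc
    rw [Fin.prod_univ_castSucc (fun i => qint (bG G i.succ))]
    simp_rw [← Fin.castSucc_succ, bG_castSucc]
    rw [← ih _ hG', Fin.succ_last]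
    by_cases hN : ∃ i : Fin (n + 1), G.Adj i.castSucc (Fin.last (n + 1))
    · obtain ⟨a, ha, hmin⟩ := WellFounded.has_min (wellFounded_lt (α := Fin (n + 1)))
        {i | G.Adj i.castSucc (Fin.last (n + 1))} hN
      have hadj (i : Fin (n + 1)) : G.Adj i.castSucc (Fin.last (n + 1)) ↔ a ≤ i := by
        refine ⟨fun h => not_lt.1 fun h' => hmin i h h', fun h => ?_⟩
        rcases h.eq_or_lt with rfl | h
        · exact ha
        · exact (hG _ _ _ (Fin.castSucc_lt_castSucc_iff.2 h) (Fin.castSucc_lt_last _) ha).2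
      have hb : bG G (Fin.last (n + 1)) = n + 1 - a := by
        simp only [bG_last, hadj, Finset.sum_boole, Nat.cast_id, ← Fin.card_Ici a]
        congr 1
        ext; simp
      have hf (i : Fin (n + 1)) (h : a ≤ i) :
          upDegree (G.comap Fin.castSucc) i = n - i := by
        have hij (j : Fin (n + 1)) (hj : i < j) : G.Adj i.castSucc j.castSucc :=
          (hG _ _ _ (Fin.castSucc_lt_castSucc_iff.2 hj) (Fin.castSucc_lt_last _)
            ((hadj i).2 h)).1
        have hmem (j : Fin (n + 1)) :
            (i < j ∧ (G.comap Fin.castSucc).Adj i j) ↔ j ∈ Finset.Ioi i := by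
          simpa using hij j
        simp only [upDegree, hmem]
        rw [Nat.card_eq_fintype_card, Fintype.card_coe, Fin.card_Ioi, Nat.add_sub_cancel]
      have := prod_range_shift qint
        (fun i => if h : i < n + 1 then upDegree (G.comap Fin.castSucc) ⟨i, h⟩ else 0)
        (a := a) (n := n) (by omega) (fun i h1 h2 => by
          rw [dif_pos (Nat.lt_succ_of_le h2)]; exact hf _ h1)
      rw [Finset.prod_range, Finset.prod_range] at this
      rw [hb]
      convert this using 2
      · rename_i i _
        rw [upDegree_castSucc]
        simp only [hadj, i.2, dif_pos]
        rfl
      · refine Finset.prod_congr rfl fun i _ => ?_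
        simp [Nat.lt_succ_of_lt i.2]
        rfl
    · push Not at hN
      rw [bG_last, Fin.prod_univ_castSucc, upDegree_castSucc, upDegree_last]
      simp [hN, qint]

end

section

open Polynomial Finset

theorem sum_X_pow_card_le {k : ℕ} (P : Finset (Fin k)) :
    ∑ j ∈ P, (X : ℤ[X]) ^ #{p ∈ P | p ≤ j} = X * qint #P := by
  induction P using Finset.induction_on_max with
  | empty => simp [qint]
  | insert a s ha ih =>
    have has : a ∉ s := fun h => (ha a h).false
    have h1 : ∀ j ∈ s, #{p ∈ insert a s | p ≤ j} = #{p ∈ s | p ≤ j} := fun j hj => by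
      rw [filter_insert, if_neg (ha j hj).not_ge]
    have h2 : #{p ∈ insert a s | p ≤ a} = #s + 1 := by
      rw [filter_true_of_mem, card_insert_of_notMem has]
      simpa using fun x hx => (ha x hx).le
    rw [sum_insert has, sum_congr rfl fun j hj => by rw [h1 j hj], ih, h2,
      card_insert_of_notMem has, qint, qint, sum_range_succ]
    ring

theorem sum_X_pow_card_lt {k : ℕ} (P : Finset (Fin k)) :
    ∑ j ∈ P, (X : ℤ[X]) ^ #{p ∈ P | j < p} = qint #P := by
  induction P using Finset.induction_on_min with
  | empty => simp [qint]
  | insert a s ha ih =>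
    have has : a ∉ s := fun h => (ha a h).false
    have h1 : ∀ j ∈ s, #{p ∈ insert a s | j < p} = #{p ∈ s | j < p} := fun j hj => by
      rw [filter_insert, if_neg (ha j hj).not_gt]
    have h2 : #{p ∈ insert a s | a < p} = #s := by
      rw [filter_insert, if_neg (lt_irrefl a), filter_true_of_mem ha]
    rw [sum_insert has, sum_congr rfl fun j hj => by rw [h1 j hj], ih, h2,
      card_insert_of_notMem has, qint, qint, sum_range_succ]
    ring

/-- Contributions of a new largest vertex with neighbours `N`: opening a new colour class in
position `c ≠ 0`, minus joining an existing class not meeting `N`. -/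
theorem sum_insert_last {n k : ℕ} (N : Finset (Fin n)) (κ : Fin n → Fin k)
    (hκ : Set.InjOn κ N) :
    (∑ c : Fin (k + 1), if c ≠ 0 then (X : ℤ[X]) ^ #{j ∈ N | c.succAbove (κ j) < c} else 0) -
      (∑ c : Fin k, if ∀ j ∈ N, κ j ≠ c then X ^ #{j ∈ N | κ j < c} else 0) =
      X * qint #N := by
  rw [← card_image_of_injOn hκ, ← sum_X_pow_card_le, Fin.sum_univ_succ]
  simp only [ne_eq, not_true_eq_false, if_false, zero_add, Fin.succ_ne_zero, not_false_eq_true,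
    if_true, Fin.succAbove_lt_iff_castSucc_lt, Fin.castSucc_lt_succ_iff]
  rw [← sum_sub_distrib, ← sum_subset (subset_univ (image κ N))]
  · refine sum_congr rfl fun c hc => ?_
    rw [if_neg (by simpa using hc), sub_zero, filter_image,
      card_image_of_injOn (hκ.mono fun x hx => (mem_filter.1 hx).1)]
  · intro c _ hc
    have hc' : ∀ j ∈ N, κ j ≠ c := by simpa using hc
    rw [if_pos hc', filter_congr fun j hj => (hc' j hj).le_iff_lt, sub_self]

/-- Contributions of a new smallest vertex with neighbours `N`: opening a new colour class in
position `c ≠ 0`, minus joining an existing class not meeting `N`. -/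
theorem sum_insert_zero {n k : ℕ} (N : Finset (Fin n)) (κ : Fin n → Fin k)
    (hκ : Set.InjOn κ N) :
    (∑ c : Fin (k + 1), if c ≠ 0 then (X : ℤ[X]) ^ #{j ∈ N | c < c.succAbove (κ j)} else 0) -
      (∑ c : Fin k, if ∀ j ∈ N, κ j ≠ c then X ^ #{j ∈ N | c < κ j} else 0) =
      qint #N := by
  rw [← card_image_of_injOn hκ, ← sum_X_pow_card_lt, Fin.sum_univ_succ]
  simp only [ne_eq, not_true_eq_false, if_false, zero_add, Fin.succ_ne_zero, not_false_eq_true,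
    if_true, Fin.lt_succAbove_iff_le_castSucc, Fin.succ_le_castSucc_iff]
  rw [← sum_sub_distrib, ← sum_subset (subset_univ (image κ N))]
  · refine sum_congr rfl fun c hc => ?_
    rw [if_neg (by simpa using hc), sub_zero, filter_image,
      card_image_of_injOn (hκ.mono fun x hx => (mem_filter.1 hx).1)]
  · intro c _ hc
    have hc' : ∀ j ∈ N, κ j ≠ c := by simpa using hc
    rw [if_pos hc', sub_self]

/-- A surjective colouring either stays surjective when the vertex `p` is removed, or `p` is
alone in its colour class. -/
theorem sum_surjective_insertNth {M : Type*} [AddCommMonoid M] {n k : ℕ} (p : Fin (n + 1))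
    (Φ : (Fin (n + 1) → Fin (k + 1)) → M) :
    (∑ κ, if Function.Surjective κ then Φ κ else 0) =
      (∑ κ : Fin n → Fin (k + 1), if Function.Surjective κ then
        ∑ c, Φ (p.insertNth c κ) else 0) +
      ∑ κ : Fin n → Fin k, if Function.Surjective κ then
        ∑ c, Φ (p.insertNth c (c.succAbove ∘ κ)) else 0 := by
  classical
  have hsurj (c : Fin (k + 1)) (κ : Fin n → Fin (k + 1)) :
      Function.Surjective (p.insertNth c κ : Fin (n + 1) → Fin (k + 1)) ↔
        Function.Surjective κ ∨ Set.range κ = {c}ᶜ := by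
    have h1 : Set.range (p.insertNth c κ : Fin (n + 1) → Fin (k + 1)) =
        insert c (Set.range κ) := by
      ext x
      rw [Set.mem_range, Fin.exists_iff_succAbove p, Set.mem_insert_iff]
      simp [eq_comm]
    rw [← Set.range_eq_univ, ← Set.range_eq_univ, h1]
    constructor
    · intro h
      by_cases hc : c ∈ Set.range κ
      · left; rwa [Set.insert_eq_of_mem hc] at h
      · right
        ext x
        have := h.ge (Set.mem_univ x)
        grind
    · rintro (h | h)
      · simp [h]
      · rw [h]; ext x; simp [em]
  have hnot (c : Fin (k + 1)) (κ : Fin n → Fin (k + 1)) (h : Function.Surjective κ) :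
      Set.range κ ≠ {c}ᶜ := fun h' => by
    have : c ∈ Set.range κ := h c
    simp [h'] at this
  rw [← (Fin.insertNthEquiv (fun _ => Fin (k + 1)) p).sum_comp, Fintype.sum_prod_type]
  change (∑ c, ∑ κ : Fin n → Fin (k + 1),
    if Function.Surjective (p.insertNth c κ : Fin (n + 1) → Fin (k + 1)) then
      Φ (p.insertNth c κ) else 0) = _
  simp only [hsurj]
  have hsplit (c : Fin (k + 1)) (κ : Fin n → Fin (k + 1)) :
      (if Function.Surjective κ ∨ Set.range κ = {c}ᶜ then Φ (p.insertNth c κ) else 0) =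
      (if Function.Surjective κ then Φ (p.insertNth c κ) else 0) +
      (if Set.range κ = {c}ᶜ then Φ (p.insertNth c κ) else 0) := by
    by_cases h : Function.Surjective κ
    · simp [h, hnot c κ h]
    · simp [h]
  simp only [hsplit, sum_add_distrib]
  congr 1
  · rw [sum_comm]
    refine sum_congr rfl fun κ _ => ?_
    split_ifs <;> simp
  · have hκ (c : Fin (k + 1)) : (∑ κ : Fin n → Fin (k + 1),
        if Set.range κ = {c}ᶜ then Φ (p.insertNth c κ) else 0) =
        ∑ κ : Fin n → Fin k, if Function.Surjective κ then
          Φ (p.insertNth c (c.succAbove ∘ κ)) else 0 := by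
      rw [← sum_filter, ← sum_filter]
      symm
      refine sum_nbij (fun κ => c.succAbove ∘ κ) ?_ ?_ ?_ (fun _ _ => rfl)
      · intro κ hκ
        have := (mem_filter.1 hκ).2
        simp [this.range_comp]
      · intro κ _ κ' _ h
        exact (Fin.succAbove_right_injective (p := c)).comp_left h
      · intro κ hκ
        have hr : Set.range κ = {c}ᶜ := by simpa using hκ
        have (j : Fin n) : ∃ x, c.succAbove x = κ j :=
          Fin.exists_succAbove_eq (by have := hr.le ⟨j, rfl⟩; simpa using this)
        choose κ' hκ' using this
        refine ⟨κ', ?_, funext hκ'⟩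
        simp only [coe_filter, mem_univ, true_and, Set.mem_ofPred_eq]
        intro x
        obtain ⟨j, hj⟩ := hr.ge (Fin.succAbove_ne c x : c.succAbove x ∈ ({c}ᶜ : Set _))
        exact ⟨j, Fin.succAbove_right_injective (p := c) ((hκ' j).trans hj)⟩
    simp only [hκ]
    rw [sum_comm]
    refine sum_congr rfl fun κ _ => ?_
    split_ifs <;> simp

end

section

open Polynomial Finset Classical

/-- The generating function by ascents of the surjective proper colourings with `k` colours for
which `v` receives the smallest colour. -/
noncomputable def surjSum {n : ℕ} (G : SimpleGraph (Fin n)) (k : ℕ) (v : Fin n) : ℤ[X] :=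
  ∑ κ : Fin n → Fin k, if Function.Surjective κ then
    if (∀ i j, G.Adj i j → κ i ≠ κ j) ∧ (κ v : ℕ) = 0 then X ^ ascNum G κ else 0 else 0

/-- The signed sum of `surjSum` over the number of colours. -/
noncomputable def sinkSum {n : ℕ} (G : SimpleGraph (Fin n)) (v : Fin n) : ℤ[X] :=
  ∑ k ∈ range (n + 1), (-1) ^ (n + k) * surjSum G k v

theorem ascNum_eq_sum {n N : ℕ} (G : SimpleGraph (Fin n)) (κ : Fin n → Fin N) :
    ascNum G κ = ∑ i, ∑ j, if i < j ∧ G.Adj i j ∧ κ i < κ j then 1 else 0 := by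
  rw [← Fintype.sum_prod_type' (fun i j => if i < j ∧ G.Adj i j ∧ κ i < κ j then 1 else 0)]
  simp [ascNum, Nat.card_eq_fintype_card, Fintype.card_subtype]

theorem ascNum_insertNth {n N : ℕ} (G : SimpleGraph (Fin (n + 1))) (p : Fin (n + 1)) (c : Fin N)
    (κ : Fin n → Fin N) :
    ascNum G (p.insertNth c κ) = ascNum (G.comap p.succAbove) κ +
      (#{j | p.succAbove j < p ∧ G.Adj p (p.succAbove j) ∧ κ j < c} +
       #{j | p < p.succAbove j ∧ G.Adj p (p.succAbove j) ∧ c < κ j}) := by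
  rw [ascNum_eq_sum, ascNum_eq_sum, Fin.sum_univ_succAbove _ p, Fin.sum_univ_succAbove _ p]
  simp_rw [Fin.sum_univ_succAbove _ p, sum_add_distrib]
  simp only [Fin.insertNth_apply_same, Fin.insertNth_apply_succAbove, card_filter,
    Fin.succAbove_lt_succAbove_iff, SimpleGraph.comap_adj, G.adj_comm (p.succAbove _) p]
  simp
  ring

theorem ascNum_strictMono_comp {n N M : ℕ} (G : SimpleGraph (Fin n)) (κ : Fin n → Fin N)
    {f : Fin N → Fin M} (hf : StrictMono f) : ascNum G (f ∘ κ) = ascNum G κ := by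
  simp [ascNum, hf.lt_iff_lt]

theorem proper_insertNth {n N : ℕ} (G : SimpleGraph (Fin (n + 1))) (p : Fin (n + 1)) (c : Fin N)
    (κ : Fin n → Fin N) :
    (∀ i j, G.Adj i j → (p.insertNth c κ : Fin (n + 1) → Fin N) i ≠
      (p.insertNth c κ : Fin (n + 1) → Fin N) j) ↔
    (∀ i j, (G.comap p.succAbove).Adj i j → κ i ≠ κ j) ∧
      ∀ j, G.Adj p (p.succAbove j) → κ j ≠ c := by
  simp only [Fin.forall_iff_succAbove p, Fin.insertNth_apply_same, Fin.insertNth_apply_succAbove,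
    SimpleGraph.comap_adj, G.adj_comm (p.succAbove _) p]
  simp only [SimpleGraph.irrefl, false_imp_iff, true_and, forall_and, ne_comm (a := c)]
  tauto

theorem val_succAbove_eq_zero {k : ℕ} (c : Fin (k + 1)) (x : Fin k) :
    (c.succAbove x : ℕ) = 0 ↔ (x : ℕ) = 0 ∧ c ≠ 0 := by
  rw [← Fin.val_ne_zero_iff]
  rcases lt_or_ge x.castSucc c with h | h
  · rw [Fin.succAbove_of_castSucc_lt _ _ h, Fin.val_castSucc]
    rw [Fin.lt_def, Fin.val_castSucc] at h
    omega
  · rw [Fin.succAbove_of_le_castSucc _ _ h, Fin.val_succ]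
    rw [Fin.le_def, Fin.val_castSucc] at h
    omega

theorem surjSum_zero {n : ℕ} (G : SimpleGraph (Fin n)) (v : Fin n) : surjSum G 0 v = 0 :=
  sum_eq_zero fun κ _ => (κ v).elim0

theorem not_surjective_of_lt {n k : ℕ} (h : n < k) (κ : Fin n → Fin k) :
    ¬ Function.Surjective κ := fun hs => by
  have := Fintype.card_le_of_surjective κ hs
  simp only [Fintype.card_fin] at this
  omega

/-- Removing a vertex `p` whose insertion into a colouring contributes `A` in total. -/
theorem sinkSum_succAbove {n : ℕ} (G : SimpleGraph (Fin (n + 1))) (p : Fin (n + 1)) (v : Fin n)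
    (w : ∀ k, (Fin n → Fin k) → Fin k → ℕ)
    (hw : ∀ k (κ : Fin n → Fin k) c,
      ascNum G (p.insertNth c κ) = ascNum (G.comap p.succAbove) κ + w k κ c)
    (A : ℤ[X])
    (hA : ∀ k (κ : Fin n → Fin k), (∀ i j, (G.comap p.succAbove).Adj i j → κ i ≠ κ j) →
      (∑ c : Fin (k + 1), if c ≠ 0 then (X : ℤ[X]) ^ w (k + 1) (c.succAbove ∘ κ) c else 0) -
      (∑ c : Fin k, if ∀ j, G.Adj p (p.succAbove j) → κ j ≠ c then X ^ w k κ c else 0) = A) :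
    sinkSum G (p.succAbove v) = A * sinkSum (G.comap p.succAbove) v := by
  set Ψ : ∀ k, (Fin (n + 1) → Fin k) → ℤ[X] := fun k κ =>
    if (∀ i j, G.Adj i j → κ i ≠ κ j) ∧ (κ (p.succAbove v) : ℕ) = 0 then X ^ ascNum G κ else 0
    with hΨ
  set J : ℕ → ℤ[X] := fun k => ∑ κ : Fin n → Fin k, if Function.Surjective κ then
        ∑ c, Ψ k (p.insertNth c κ) else 0 with hJ
  set W : ℕ → ℤ[X] := fun k => ∑ κ : Fin n → Fin k, if Function.Surjective κ then
        ∑ c, Ψ (k + 1) (p.insertNth c (c.succAbove ∘ κ)) else 0 with hW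
  have hS (k : ℕ) : surjSum G (k + 1) (p.succAbove v) = J (k + 1) + W k :=
    sum_surjective_insertNth p (Ψ (k + 1))
  have hWJ (k : ℕ) : W k - J k = A * surjSum (G.comap p.succAbove) k v := by
    rw [hW, hJ, surjSum, mul_sum, ← sum_sub_distrib]
    refine sum_congr rfl fun κ _ => ?_
    by_cases hs : Function.Surjective κ
    swap
    · simp [hs]
    simp only [hs, if_true, hΨ, proper_insertNth, Fin.insertNth_apply_succAbove, hw]
    by_cases hκ : (∀ i j, (G.comap p.succAbove).Adj i j → κ i ≠ κ j) ∧ (κ v : ℕ) = 0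
    · obtain ⟨h1, h2⟩ := hκ
      rw [if_pos ⟨h1, h2⟩, ← hA k κ h1, sub_mul, sum_mul, sum_mul]
      congr 1
      · refine sum_congr rfl fun c _ => ?_
        have h3 : ∀ i j, (G.comap p.succAbove).Adj i j →
          (c.succAbove ∘ κ) i ≠ (c.succAbove ∘ κ) j := fun i j hij h =>
            h1 i j hij (Fin.succAbove_right_injective h)
        have h4 : ∀ j, G.Adj p (p.succAbove j) → (c.succAbove ∘ κ) j ≠ c :=
          fun j _ => Fin.succAbove_ne c _
        rw [ascNum_strictMono_comp _ _ (Fin.strictMono_succAbove c)]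
        by_cases hc : c ≠ 0
        · rw [if_pos ⟨⟨h3, h4⟩, (val_succAbove_eq_zero c _).2 ⟨h2, hc⟩⟩, if_pos hc]
          ring
        · rw [if_neg fun h => hc ((val_succAbove_eq_zero c _).1 h.2).2, if_neg hc, zero_mul]
      · refine sum_congr rfl fun c _ => ?_
        by_cases hc : ∀ j, G.Adj p (p.succAbove j) → κ j ≠ c
        · rw [if_pos ⟨⟨h1, hc⟩, h2⟩, if_pos hc]
          ring
        · rw [if_neg fun h => hc h.1.2, if_neg hc, zero_mul]
    · rw [if_neg hκ, mul_zero, sum_eq_zero, sum_eq_zero, sub_zero]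
      · intro c _
        rw [if_neg fun h => hκ ⟨h.1.1, h.2⟩]
      · intro c _
        refine if_neg fun h => hκ ⟨fun i j hij h' => h.1.1 i j hij ?_,
          ((val_succAbove_eq_zero c _).1 h.2).1⟩
        simp [h']
  have hJ0 : J 0 = 0 := sum_eq_zero fun κ _ => (κ v).elim0
  have hJn : J (n + 1) = 0 := sum_eq_zero fun κ _ => if_neg (not_surjective_of_lt (by omega) κ)
  have hshift : ∑ k ∈ range (n + 1), (-1) ^ (n + k) * J (k + 1) =
      - ∑ k ∈ range (n + 1), (-1) ^ (n + k) * J k := by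
    rw [sum_range_succ, hJn, sum_range_succ', hJ0, mul_zero, mul_zero, add_zero, add_zero,
      ← sum_neg_distrib]
    refine sum_congr rfl fun k _ => ?_
    ring
  rw [sinkSum, sum_range_succ', surjSum_zero, mul_zero, add_zero, sinkSum, mul_sum]
  simp_rw [mul_left_comm A, ← hWJ, mul_sub, sum_sub_distrib, hS, mul_add, sum_add_distrib]
  rw [sub_eq_add_neg, ← hshift, add_comm]
  congr 1 <;> refine sum_congr rfl fun k _ => ?_ <;> ring

theorem sinkSum_castSucc {n : ℕ} (G : SimpleGraph (Fin (n + 1))) (hG : IsNUIG G) (v : Fin n) :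
    sinkSum G v.castSucc =
      X * qint (bG G (Fin.last n)) * sinkSum (G.comap Fin.castSucc) v := by
  have key := sinkSum_succAbove G (Fin.last n) v
    (fun k κ c => #{j ∈ ({j | G.Adj (Fin.last n) j.castSucc} : Finset (Fin n)) | κ j < c})
    (fun k κ c => by
      rw [ascNum_insertNth]
      simp [Fin.castSucc_lt_last, not_lt_of_ge (Fin.le_last _), filter_filter])
    (X * qint #{j : Fin n | G.Adj (Fin.last n) j.castSucc})
    (fun k κ hκ => by
      rw [← sum_insert_last _ κ]
      · simp
      · intro i hi j hj hij
        simp only [coe_filter, mem_univ, true_and, Set.mem_ofPred_eq] at hi hj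
        by_contra hne
        rcases lt_or_gt_of_ne hne with h | h
        · exact hκ i j (by simpa using
            (hG _ _ _ (Fin.castSucc_lt_castSucc_iff.2 h) (Fin.castSucc_lt_last _) hi.symm).1) hij
        · exact hκ j i (by simpa using
            (hG _ _ _ (Fin.castSucc_lt_castSucc_iff.2 h) (Fin.castSucc_lt_last _) hj.symm).1)
            hij.symm)
  rw [bG_last]
  simpa [Fin.succAbove_last, G.adj_comm (Fin.last n)] using key

theorem sinkSum_succ {n : ℕ} (G : SimpleGraph (Fin (n + 1))) (hG : IsNUIG G) (v : Fin n) :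
    sinkSum G v.succ = qint (upDegree G 0) * sinkSum (G.comap Fin.succ) v := by
  have key := sinkSum_succAbove G 0 v
    (fun k κ c => #{j ∈ ({j | G.Adj 0 j.succ} : Finset (Fin n)) | c < κ j})
    (fun k κ c => by
      rw [ascNum_insertNth]
      simp [filter_filter])
    (qint #{j : Fin n | G.Adj 0 j.succ})
    (fun k κ hκ => by
      rw [← sum_insert_zero _ κ]
      · simp
        congr!
      · intro i hi j hj hij
        simp only [coe_filter, mem_univ, true_and, Set.mem_ofPred_eq] at hi hj
        by_contra hne
        rcases lt_or_gt_of_ne hne with h | h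
        · exact hκ i j (by simpa using
            (hG _ _ _ (Fin.succ_pos _) (Fin.succ_lt_succ_iff.2 h) hj).2) hij
        · exact hκ j i (by simpa using
            (hG _ _ _ (Fin.succ_pos _) (Fin.succ_lt_succ_iff.2 h) hi).2) hij.symm)
  rw [upDegree_zero]
  simpa [Fin.succAbove_zero] using key

theorem sinkSum_fin_one (G : SimpleGraph (Fin 1)) (v : Fin 1) : sinkSum G v = 1 := by
  have h : ascNum G (fun _ => 0 : Fin 1 → Fin 1) = 0 := by
    simp [ascNum_eq_sum]
  have hs : Function.Surjective (fun _ => 0 : Fin 1 → Fin 1) := fun x => ⟨0, Subsingleton.elim _ _⟩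
  have hadj : ∀ i j, ¬ G.Adj i j := fun i j hij => hij.ne (Subsingleton.elim _ _)
  simp [sinkSum, sum_range_succ, surjSum, hs, h, hadj]

theorem sinkSum_last {n : ℕ} (G : SimpleGraph (Fin (n + 1))) (hG : IsNUIG G) :
    sinkSum G (Fin.last n) = ∏ i : Fin n, qint (upDegree G i.castSucc) := by
  induction n with
  | zero => simp [sinkSum_fin_one]
  | succ n ih =>
    rw [← Fin.succ_last, sinkSum_succ G hG, ih _ (isNUIG_comap hG Fin.strictMono_succ),
      Fin.prod_univ_succ]
    simp_rw [← Fin.succ_castSucc, upDegree_succ, Fin.castSucc_zero]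

theorem sinkSum_eq {n : ℕ} (G : SimpleGraph (Fin (n + 1))) (hG : IsNUIG G) (v : Fin (n + 1)) :
    sinkSum G v = X ^ (n - (v : ℕ)) * ∏ i : Fin n, qint (bG G i.succ) := by
  induction n with
  | zero => simp [sinkSum_fin_one]
  | succ n ih =>
    induction v using Fin.lastCases with
    | last => rw [sinkSum_last G hG, prod_qint_upDegree G hG]; simp
    | cast v =>
      rw [sinkSum_castSucc G hG, ih _ (isNUIG_comap hG Fin.strictMono_castSucc),
        Fin.prod_univ_castSucc, Fin.succ_last, Fin.val_castSucc,
        Nat.sub_add_comm (Nat.lt_succ_iff.1 v.2)]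
      simp_rw [← Fin.castSucc_succ, bG_castSucc]
      ring

theorem sum_sinkSum {n : ℕ} (G : SimpleGraph (Fin (n + 1))) (hG : IsNUIG G) :
    ∑ v, sinkSum G v = qint (n + 1) * ∏ i : Fin n, qint (bG G i.succ) := by
  simp_rw [sinkSum_eq G hG, ← sum_mul]
  rw [Fin.sum_univ_eq_sum_range (fun v => (X : ℤ[X]) ^ (n - v)), qint, ← sum_range_reflect]
  congr 1
  refine sum_congr rfl fun k hk => ?_
  have := mem_range.1 hk
  congr 1
  omega

end

section

open Polynomial Finset

theorem exists_polynomial_choose (b : ℕ) : ∃ p : ℚ[X], p.natDegree ≤ b ∧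
    (∀ u : ℕ, p.eval (u + 1 : ℚ) = u.choose b) ∧ p.eval 0 = (-1) ^ b := by
  induction b with
  | zero => exact ⟨1, by simp, by simp, by simp⟩
  | succ b ih =>
    obtain ⟨p, hp, hu, h0⟩ := ih
    have hb : (b + 1 : ℚ) ≠ 0 := by positivity
    refine ⟨p * (C (b + 1 : ℚ)⁻¹ * (X - C (b + 1 : ℚ))), ?_, fun u => ?_, ?_⟩
    · refine natDegree_mul_le_of_le hp ?_
      exact (natDegree_C_mul_le _ _).trans (natDegree_X_sub_C_le _)
    · have h : (u.choose (b + 1) : ℚ) * (b + 1) = u.choose b * (u - b) := by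
        rcases le_or_gt b u with hbu | hbu
        · have := Nat.choose_succ_right_eq u b
          rw [← Nat.cast_sub hbu]
          exact_mod_cast this
        · simp [Nat.choose_eq_zero_of_lt hbu,
            Nat.choose_eq_zero_of_lt (hbu.trans (Nat.lt_succ_self b))]
      simp only [eval_mul, eval_C, eval_sub, eval_X, hu]
      field_simp
      linear_combination -h
    · simp only [eval_mul, eval_C, eval_sub, eval_X, h0]
      field_simp
      ring

theorem sum_fwdDiff_iter_eq (f : ℚ → ℚ) (n : ℕ) :
    ∑ m ∈ range n, (-1) ^ m * (fwdDiff 1)^[m] f 1 = f 0 - (-1) ^ n * (fwdDiff 1)^[n] f 0 := by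
  induction n with
  | zero => simp
  | succ n ih =>
    have : (fwdDiff 1)^[n + 1] f 0 = (fwdDiff 1)^[n] f 1 - (fwdDiff 1)^[n] f 0 := by
      rw [Function.iterate_succ_apply', fwdDiff, zero_add]
    rw [sum_range_succ, ih, this]
    ring

theorem sum_alternating_choose_eval_eq (P : ℚ[X]) {n : ℕ} (hP : P.natDegree < n) :
    ∑ m ∈ range n, (-1) ^ m * ∑ j ∈ range (m + 1),
      (m.choose j : ℚ) * ((-1) ^ j * P.eval (((m - j : ℕ) : ℚ) + 1)) = P.eval 0 := by
  have h := sum_fwdDiff_iter_eq P.eval n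
  rw [fwdDiff_iter_eq_zero_of_degree_lt hP] at h
  simp only [Pi.zero_apply, mul_zero, sub_zero] at h
  rw [← h]
  refine sum_congr rfl fun m _ => ?_
  rw [fwdDiff_iter_eq_sum_shift, ← sum_range_reflect]
  congr 1
  refine sum_congr rfl fun j hj => ?_
  have hj' : j ≤ m := Nat.lt_succ_iff.1 (mem_range.1 hj)
  rw [Nat.add_sub_cancel, Nat.choose_symm hj', Nat.sub_sub_self hj', zsmul_eq_mul, nsmul_one,
    add_comm (1 : ℚ)]
  push_cast
  ring

/-- The indicator function of the complement of `U`. -/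
noncomputable def coIndicator {m : ℕ} (U : Finset (Fin (m + 1))) (i : Fin (m + 1)) : ℤ[X] :=
  if i ∈ U then 0 else 1

/-- The functional sending a monomial to its exponent at the variable `0` if it involves all the
variables, and to `0` otherwise. -/
noncomputable def fullSupport (m : ℕ) : MvPolynomial (Fin (m + 1)) ℤ[X] →ₗ[ℤ[X]] ℤ[X] :=
  ∑ U ∈ (univ.erase (0 : Fin (m + 1))).powerset, (-1 : ℤ[X]) ^ #U •
    ((MvPolynomial.aeval (coIndicator U)).toLinearMap ∘ₗ
      (MvPolynomial.pderiv (0 : Fin (m + 1))).toLinearMap)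

theorem fullSupport_apply (m : ℕ) (f : MvPolynomial (Fin (m + 1)) ℤ[X]) :
    fullSupport m f = ∑ U ∈ (univ.erase (0 : Fin (m + 1))).powerset, (-1 : ℤ[X]) ^ #U *
      MvPolynomial.aeval (coIndicator U) (MvPolynomial.pderiv (0 : Fin (m + 1)) f) := by
  simp [fullSupport]

theorem sum_powersetCard_coIndicator {m : ℕ} (S U : Finset (Fin (m + 1))) (a : ℕ) :
    ∑ t ∈ powersetCard a S, ∏ i ∈ t, coIndicator U i = ((#(S \ U)).choose a : ℤ[X]) := by
  have h (t : Finset (Fin (m + 1))) :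
      ∏ i ∈ t, coIndicator U i = if Disjoint t U then 1 else 0 := by
    split_ifs with ht
    · exact prod_eq_one fun i hi => if_neg (disjoint_left.1 ht hi)
    · obtain ⟨i, hi, hiU⟩ := not_disjoint_iff.1 ht
      exact prod_eq_zero hi (if_pos hiU)
  simp_rw [h]
  rw [sum_boole, ← card_powersetCard]
  congr 2
  ext t
  simp only [mem_filter, mem_powersetCard, subset_sdiff]
  tauto

theorem aeval_coIndicator_esymm {m : ℕ} {U : Finset (Fin (m + 1))} (hU : U ⊆ univ.erase 0)
    (a : ℕ) : MvPolynomial.aeval (coIndicator U) (MvPolynomial.esymm (Fin (m + 1)) ℤ[X] a) =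
      ((m - #U + 1).choose a : ℤ[X]) := by
  have hc : #(univ \ U) = m - #U + 1 := by
    have := card_le_card hU
    rw [card_erase_of_mem (mem_univ _), card_univ, Fintype.card_fin] at this
    rw [card_sdiff_of_subset (subset_univ _), card_univ, Fintype.card_fin]
    omega
  rw [MvPolynomial.esymm, map_sum, ← hc, ← sum_powersetCard_coIndicator]
  simp

theorem pderiv_prod_X {ι σ : Type*} [DecidableEq ι] [DecidableEq σ] {R : Type*} [CommRing R]
    (s : Finset ι) (κ : ι → σ) (i : σ) :
    MvPolynomial.pderiv i (∏ v ∈ s, (MvPolynomial.X (κ v) : MvPolynomial σ R)) =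
      ∑ v ∈ s, if κ v = i then ∏ w ∈ s.erase v, MvPolynomial.X (κ w) else 0 := by
  induction s using Finset.induction_on with
  | empty => simp
  | insert a s ha ih =>
    rw [prod_insert ha, Derivation.leibniz, ih, sum_insert ha, erase_insert ha, smul_sum, add_comm,
      MvPolynomial.pderiv_X, Pi.single_apply, smul_eq_mul, mul_ite, mul_one, mul_zero]
    congr 1
    refine sum_congr rfl fun v hv => ?_
    rw [smul_ite, smul_zero, smul_eq_mul, erase_insert_of_ne (ne_of_mem_of_not_mem hv ha).symm,
      prod_insert fun h => ha (mem_of_mem_erase h)]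

theorem aeval_coIndicator_pderiv_esymm {m : ℕ} {U : Finset (Fin (m + 1))}
    (hU : U ⊆ univ.erase 0) (b : ℕ) :
    MvPolynomial.aeval (coIndicator U)
      (MvPolynomial.pderiv 0 (MvPolynomial.esymm (Fin (m + 1)) ℤ[X] (b + 1))) =
      ((m - #U).choose b : ℤ[X]) := by
  have hc : #(univ.erase 0 \ U) = m - #U := by
    rw [card_sdiff_of_subset hU, card_erase_of_mem (mem_univ _), card_univ, Fintype.card_fin,
      Nat.add_sub_cancel]
  have h0 : (0 : Fin (m + 1)) ∉ univ.erase 0 := notMem_erase _ _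
  have hpd (t : Finset (Fin (m + 1))) (ht : (0 : Fin (m + 1)) ∉ t) :
      MvPolynomial.pderiv 0 (∏ i ∈ t, (MvPolynomial.X i : MvPolynomial (Fin (m + 1)) ℤ[X])) = 0 :=
      by
    rw [pderiv_prod_X t fun i => i]
    exact sum_eq_zero fun i hi => if_neg fun (h : i = 0) => ht (h ▸ hi)
  have hsub {t : Finset (Fin (m + 1))} {b : ℕ} (ht : t ∈ powersetCard b (univ.erase 0)) :
      (0 : Fin (m + 1)) ∉ t := fun h => h0 ((mem_powersetCard.1 ht).1 h)
  rw [MvPolynomial.esymm, ← insert_erase (mem_univ (0 : Fin (m + 1))),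
    powersetCard_succ_insert h0, sum_union, sum_image, map_add, map_add, map_sum, map_sum,
    sum_eq_zero, zero_add, map_sum, map_sum, ← hc, ← sum_powersetCard_coIndicator]
  · refine sum_congr rfl fun t ht => ?_
    rw [prod_insert (hsub ht), Derivation.leibniz, hpd t (hsub ht)]
    simp
  · exact fun t ht => by rw [hpd t (hsub ht), map_zero]
  · intro t ht t' ht' h
    rw [← erase_insert (hsub ht), ← erase_insert (hsub ht')]
    exact congrArg (fun s => s.erase 0) h
  · rw [disjoint_left]
    intro t ht ht'
    obtain ⟨s, -, rfl⟩ := mem_image.1 ht'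
    exact hsub ht (mem_insert_self _ _)

theorem exists_polynomial_esymmPart (s : Multiset ℕ) (hs : ∀ a ∈ s, 0 < a) :
    ∃ (e h : ℕ → ℤ) (E P : ℚ[X]),
      (∀ (m : ℕ) (U : Finset (Fin (m + 1))), U ⊆ univ.erase 0 →
        MvPolynomial.aeval (coIndicator U)
          (s.map (MvPolynomial.esymm (Fin (m + 1)) ℤ[X])).prod = (e (m - #U) : ℤ[X]) ∧
        MvPolynomial.aeval (coIndicator U) (MvPolynomial.pderiv 0
          (s.map (MvPolynomial.esymm (Fin (m + 1)) ℤ[X])).prod) = (h (m - #U) : ℤ[X])) ∧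
      (∀ u : ℕ, (e u : ℚ) = E.eval (u + 1 : ℚ)) ∧ (∀ u : ℕ, (h u : ℚ) = P.eval (u + 1 : ℚ)) ∧
      E.natDegree ≤ s.sum ∧ (P = 0 ∨ P.natDegree < s.sum) ∧
      E.eval 0 = (if s = 0 then 1 else 0) ∧
      P.eval 0 = (if s.card = 1 then (-1) ^ (s.sum + 1) else 0) := by
  induction s using Multiset.induction_on with
  | empty => exact ⟨1, 0, 1, 0, by simp⟩
  | cons a s ih =>
    obtain ⟨e, h, E, P, hev, he, hh, hE, hP, hE0, hP0⟩ :=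
      ih fun a ha => hs a (Multiset.mem_cons_of_mem ha)
    obtain ⟨b, rfl⟩ := Nat.exists_eq_add_one.2 (hs a (Multiset.mem_cons_self _ _))
    obtain ⟨B, hBd, hB, hB0⟩ := exists_polynomial_choose b
    obtain ⟨B', hBd', hB', hB0'⟩ := exists_polynomial_choose (b + 1)
    have hBB : (B + B').natDegree ≤ b + 1 :=
      natDegree_add_le_of_degree_le (hBd.trans b.le_succ) hBd'
    refine ⟨fun u => (u + 1).choose (b + 1) * e u,
      fun u => (u + 1).choose (b + 1) * h u + u.choose b * e u,
      (B + B') * E, (B + B') * P + B * E, fun m U hU => ?_, fun u => ?_, fun u => ?_,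
      ?_, ?_, ?_, ?_⟩
    · rw [Multiset.map_cons, Multiset.prod_cons, map_mul, Derivation.leibniz, map_add,
        smul_eq_mul, smul_eq_mul, map_mul, map_mul, (hev m U hU).1, (hev m U hU).2,
        aeval_coIndicator_esymm hU, aeval_coIndicator_pderiv_esymm hU]
      push_cast
      exact ⟨rfl, by ring⟩
    · push_cast [Nat.choose_succ_succ]
      rw [eval_mul, eval_add, hB, hB', he]
    · push_cast [Nat.choose_succ_succ]
      rw [eval_add, eval_mul, eval_mul, eval_add, hB, hB', he, hh]
    · rw [Multiset.sum_cons]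
      exact natDegree_mul_le_of_le hBB hE
    · right
      rw [Multiset.sum_cons]
      have h1 : (B * E).natDegree ≤ b + s.sum := natDegree_mul_le_of_le hBd hE
      rcases hP with rfl | hP
      · rw [mul_zero, zero_add]
        omega
      · have h2 : ((B + B') * P).natDegree ≤ b + 1 + P.natDegree :=
          natDegree_mul_le_of_le hBB le_rfl
        have := natDegree_add_le ((B + B') * P) (B * E)
        omega
    · simp [hB0, hB0', pow_succ]
    · simp [hB0, hB0', pow_succ, hE0]
      split_ifs with h <;> simp [h, pow_succ]

theorem sum_fullSupport_esymmPart {n : ℕ} (hn : 0 < n) (μ : Nat.Partition n) :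
    ∑ m ∈ range n, (-1) ^ (n + (m + 1)) *
      fullSupport m (MvPolynomial.esymmPart (Fin (m + 1)) ℤ[X] μ) =
      if μ = Nat.Partition.indiscrete n then 1 else 0 := by
  obtain ⟨_, h, _, P, hev, -, hh, -, hP, -, hP0⟩ :=
    exists_polynomial_esymmPart μ.parts fun a ha => μ.parts_pos ha
  rw [μ.parts_sum] at hP hP0
  have hdeg : P.natDegree < n := by
    rcases hP with rfl | hP
    · simpa
    · exact hP
  have hval (m : ℕ) : fullSupport m (MvPolynomial.esymmPart (Fin (m + 1)) ℤ[X] μ) =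
      ((∑ j ∈ range (m + 1), (m.choose j : ℤ) * ((-1) ^ j * h (m - j)) : ℤ) : ℤ[X]) := by
    rw [fullSupport_apply, MvPolynomial.esymmPart]
    have hcard : #(univ.erase (0 : Fin (m + 1))) = m := by simp
    have := sum_powerset_apply_card (fun j => (-1 : ℤ[X]) ^ j * (h (m - j) : ℤ[X]))
      (x := univ.erase (0 : Fin (m + 1)))
    rw [hcard] at this
    push_cast
    simp only [nsmul_eq_mul] at this
    rw [← this]
    refine sum_congr rfl fun U hU => ?_
    rw [(hev m U (mem_powerset.1 hU)).2]
  have hμ : μ = Nat.Partition.indiscrete n ↔ μ.parts.card = 1 := by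
    constructor
    · rintro rfl
      simp [hn.ne']
    · intro h
      obtain ⟨a, ha⟩ := Multiset.card_eq_one.1 h
      have hsum := μ.parts_sum
      rw [ha, Multiset.sum_singleton] at hsum
      ext1
      rw [Nat.Partition.indiscrete_parts hn.ne', ha, hsum]
  have h_intCast : ∑ m ∈ range n, (-1 : ℤ) ^ (n + (m + 1)) *
      ∑ j ∈ range (m + 1), (m.choose j : ℤ) * ((-1) ^ j * h (m - j)) =
      if μ = Nat.Partition.indiscrete n then 1 else 0 := by
    have key := sum_alternating_choose_eval_eq P hdeg
    simp_rw [← hh] at key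
    have hq : (∑ m ∈ range n, (-1 : ℚ) ^ (n + (m + 1)) *
        ∑ j ∈ range (m + 1), (m.choose j : ℚ) * ((-1) ^ j * (h (m - j) : ℚ))) =
        if μ = Nat.Partition.indiscrete n then 1 else 0 := by
      have : ∀ m, (-1 : ℚ) ^ (n + (m + 1)) = (-1) ^ (n + 1) * (-1) ^ m := fun m => by ring
      rw [sum_congr rfl fun m _ => by rw [this m, mul_assoc], ← mul_sum]
      rw [key, hP0]
      simp only [hμ]
      split_ifs
      · rw [← pow_add, Even.neg_one_pow ⟨_, rfl⟩]
      · simp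
    exact_mod_cast hq
  simp_rw [hval]
  have := congrArg (Int.cast : ℤ → ℤ[X]) h_intCast
  push_cast at this ⊢
  exact this

theorem aeval_pderiv_prod_X {n m : ℕ} {U : Finset (Fin (m + 1))} (hU : U ⊆ univ.erase 0)
    (κ : Fin n → Fin (m + 1)) :
    MvPolynomial.aeval (coIndicator U) (MvPolynomial.pderiv 0
      (∏ i, (MvPolynomial.X (κ i) : MvPolynomial (Fin (m + 1)) ℤ[X]))) =
      if U ⊆ univ \ univ.image κ then (#{v | κ v = 0} : ℤ[X]) else 0 := by
  have hU0 : (0 : Fin (m + 1)) ∉ U := fun h => notMem_erase _ _ (hU h)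
  rw [pderiv_prod_X, map_sum, ← sum_boole]
  split_ifs with hκ
  · refine sum_congr rfl fun v _ => ?_
    split_ifs with hv
    · rw [map_prod]
      refine prod_eq_one fun w _ => ?_
      rw [MvPolynomial.aeval_X]
      exact if_neg fun h => (mem_sdiff.1 (hκ h)).2 (mem_image_of_mem _ (mem_univ w))
    · exact map_zero _
  · obtain ⟨i, hiU, hi⟩ := not_subset.1 hκ
    have hi' : ∃ w, κ w = i := by simpa using hi
    obtain ⟨w, rfl⟩ := hi'
    refine sum_eq_zero fun v _ => ?_
    split_ifs with hv
    · rw [map_prod]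
      refine prod_eq_zero (mem_erase.2 ⟨?_, mem_univ w⟩) ?_
      · rintro rfl
        exact hU0 (hv ▸ hiU)
      · rw [MvPolynomial.aeval_X]
        exact if_pos hiU
    · exact map_zero _

theorem fullSupport_prod_X {n m : ℕ} (κ : Fin n → Fin (m + 1)) :
    fullSupport m (∏ i, MvPolynomial.X (κ i)) =
      ∑ v, if Function.Surjective κ ∧ (κ v : ℕ) = 0 then 1 else 0 := by
  classical
  have hcount : (∑ v, if Function.Surjective κ ∧ (κ v : ℕ) = 0 then 1 else 0 : ℤ[X]) =
      if univ \ univ.image κ = ∅ then (#{v | κ v = 0} : ℤ[X]) else 0 := by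
    have hs : Function.Surjective κ ↔ univ \ univ.image κ = ∅ := by
      rw [sdiff_eq_empty_iff_subset, univ_subset_iff, eq_univ_iff_forall]
      simp [Function.Surjective]
    rw [← sum_boole, ← if_congr hs rfl rfl]
    split_ifs with h
    · exact sum_congr rfl fun v _ =>
        if_congr ((and_iff_right h).trans Fin.val_eq_zero_iff) rfl rfl
    · exact sum_eq_zero fun v _ => if_neg fun hv => h hv.1
  rw [fullSupport_apply, hcount]
  rw [sum_congr rfl fun U hU => by rw [aeval_pderiv_prod_X (mem_powerset.1 hU)]]
  by_cases h0 : (0 : Fin (m + 1)) ∈ univ.image κ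
  · have hp : {U ∈ (univ.erase (0 : Fin (m + 1))).powerset | U ⊆ univ \ univ.image κ} =
        (univ \ univ.image κ).powerset := by
      ext U
      simp only [mem_filter, mem_powerset, and_iff_right_iff_imp]
      exact fun h => h.trans fun i hi =>
        mem_erase.2 ⟨fun h => (mem_sdiff.1 hi).2 (h ▸ h0), mem_univ i⟩
    have hs := congrArg (Int.cast : ℤ → ℤ[X]) 
      (sum_powerset_neg_one_pow_card (x := univ \ univ.image κ))
    push_cast at hs
    simp only [mul_ite, mul_zero]
    rw [← sum_filter, hp, ← sum_mul, hs]
    split_ifs <;> simp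
  · have hz : #{v | κ v = 0} = 0 := by
      rw [card_eq_zero, filter_eq_empty_iff]
      exact fun v _ hv => h0 (mem_image.2 ⟨v, mem_univ v, hv⟩)
    simp [hz]

end
section

open Polynomial Finset Classical

theorem fullSupport_cqf {n : ℕ} (G : SimpleGraph (Fin n)) (m : ℕ) :
    fullSupport m (cqf G (m + 1)) = ∑ v, surjSum G (m + 1) v := by
  simp only [cqf, surjSum, finsum_eq_if, finsum_eq_sum_of_fintype, map_sum]
  rw [sum_comm]
  refine sum_congr rfl fun κ _ => ?_
  by_cases hκ : ∀ i j, G.Adj i j → κ i ≠ κ j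
  · rw [if_pos hκ, MvPolynomial.C_mul', map_smul, fullSupport_prod_X, smul_sum]
    refine sum_congr rfl fun v _ => ?_
    rw [smul_ite, smul_zero, smul_eq_mul, mul_one, ite_and]
    exact if_congr Iff.rfl (if_congr (and_iff_right hκ).symm rfl rfl) rfl
  · rw [if_neg hκ, map_zero]
    refine (sum_eq_zero fun v _ => ?_).symm
    exact (if_congr Iff.rfl (if_neg fun h => hκ h.1) rfl).trans (ite_self 0)

theorem sum_sinkSum_eq_coeff {n : ℕ} (hn : 0 < n) (G : SimpleGraph (Fin n))
    (c : Nat.Partition n → ℤ[X])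
    (hc : ∀ N : ℕ, cqf G N = ∑ μ : Nat.Partition n,
      MvPolynomial.C (c μ) * MvPolynomial.esymmPart (Fin N) ℤ[X] μ) :
    ∑ v, sinkSum G v = c (Nat.Partition.indiscrete n) := by
  calc ∑ v, sinkSum G v
      = ∑ m ∈ range n, (-1) ^ (n + (m + 1)) * fullSupport m (cqf G (m + 1)) := by
        simp only [sinkSum, sum_range_succ', surjSum_zero, mul_zero, add_zero]
        rw [sum_comm]
        simp only [fullSupport_cqf, mul_sum]
    _ = ∑ μ, c μ * ∑ m ∈ range n, (-1) ^ (n + (m + 1)) *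
          fullSupport m (MvPolynomial.esymmPart (Fin (m + 1)) ℤ[X] μ) := by
        simp only [hc, map_sum, MvPolynomial.C_mul', map_smul, smul_eq_mul, mul_sum]
        rw [sum_comm]
        exact sum_congr rfl fun μ _ => sum_congr rfl fun m _ => mul_left_comm _ _ _
    _ = c (Nat.Partition.indiscrete n) := by
        simp only [sum_fullSupport_esymmPart hn, mul_ite, mul_one, mul_zero, sum_ite_eq', mem_univ,
          if_true]

end

/-- if `X_G(x;q) = Σ_μ c_μ(q) e_μ` is the elementary symmetric function
expansion for a natural unit interval graph `G` on `[n]`, then the coefficient of `e_n`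
(the one-part partition) is `[n]_q [b_2]_q ⋯ [b_n]_q`. -/
theorem coeff_esymm_top_part {n : ℕ} (hn : 0 < n) (G : SimpleGraph (Fin n))
    (hG : IsNUIG G) (c : Nat.Partition n → Polynomial ℤ)
    (hc : ∀ N : ℕ, cqf G N = ∑ μ : Nat.Partition n,
      MvPolynomial.C (c μ) * MvPolynomial.esymmPart (Fin N) (Polynomial ℤ) μ) :
    c (Nat.Partition.indiscrete n) =
      qint n * ∏ i ∈ Finset.univ.filter (fun i : Fin n => (i : ℕ) ≠ 0), qint (bG G i) := by
  obtain ⟨k, rfl⟩ := Nat.exists_eq_add_one.2 hn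
  rw [← sum_sinkSum_eq_coeff hn G c hc, sum_sinkSum G hG, Finset.prod_filter, Fin.prod_univ_succ]
  simp
end

section
/- The chromatic quasisymmetric function of the path P_n = ([n], {{i,i+1} : 1 ≤ i ≤ n-1}) satisfies X_{P_n}(x;q) = Σ_{α ⊨ n} q^{ℓ(α)-1} [α_1]_q [α_2 - 1]_q ··· [α_m - 1]_q · e_{sort(α)}, summing over all compositions α = (α_1,...,α_m) of n. In particular X_{P_n}(x;q) is e-positive. -/
/-- `e_{sort(α)}` for a list of parts `α` (sorting is immaterial in the product). -/
noncomputable def esymmProd (N : ℕ) (parts : List ℕ) :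
    MvPolynomial (Fin N) (Polynomial ℤ) :=
  (parts.map (MvPolynomial.esymm (Fin N) (Polynomial ℤ))).prod

open Finset in
/-- Splitting off the first part of a composition. -/
theorem Composition.sum_blocks_succ {M : Type*} [AddCommMonoid M] (f : List ℕ → M) (n : ℕ) :
    ∑ α : Composition (n + 1), f α.blocks =
      ∑ p ∈ antidiagonal n, ∑ β : Composition p.2, f ((p.1 + 1) :: β.blocks) := by
  rw [Finset.sum_sigma']
  symm
  refine Finset.sum_bij (fun s hs => ⟨(s.1.1 + 1) :: s.2.blocks, ?_, ?_⟩) ?_ ?_ ?_ ?_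
  · intro i hi
    rcases List.mem_cons.1 hi with rfl | hi
    · omega
    · exact s.2.blocks_pos hi
  · have := mem_antidiagonal.1 (mem_sigma.1 hs).1
    simp only [List.sum_cons, Composition.blocks_sum]
    omega
  · simp
  · rintro ⟨⟨a, b⟩, β⟩ hs ⟨⟨a', b'⟩, β'⟩ hs' h
    simp only [Composition.mk.injEq, List.cons.injEq, add_left_inj] at h
    obtain ⟨rfl, h⟩ := h
    obtain rfl : b = b' := β.blocks_sum.symm.trans ((congrArg List.sum h).trans β'.blocks_sum)
    rw [Composition.ext h]
  · intro α _
    obtain ⟨l, hpos, hsum⟩ := α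
    cases l with
    | nil => simp at hsum
    | cons a t =>
      have ha : 0 < a := hpos (by simp)
      simp only [List.sum_cons] at hsum
      refine ⟨⟨(a - 1, t.sum), ⟨t, fun hi => hpos (by simp [hi]), rfl⟩⟩, ?_, ?_⟩
      · simp only [mem_sigma, HasAntidiagonal.mem_antidiagonal, mem_univ, and_true]
        omega
      · exact Composition.ext (congrArg (· :: t) (Nat.sub_add_cancel ha))
  · simp

/-- The generating series of compositions, each part `k` being weighted by `g k`. -/
noncomputable def compositionSeries {R : Type*} [CommRing R] (g : ℕ → R) : PowerSeries R :=
  PowerSeries.mk fun n => ∑ β : Composition n, (β.blocks.map g).prod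

theorem coeff_mk_mul_compositionSeries {R : Type*} [CommRing R] (h g : ℕ → R) (h0 : h 0 = 0)
    {n : ℕ} (hn : 0 < n) :
    PowerSeries.coeff n (PowerSeries.mk h * compositionSeries g) =
      ∑ α : Composition n, h α.blocks.headI * (α.blocks.tail.map g).prod := by
  obtain ⟨n, rfl⟩ := Nat.exists_eq_succ_of_ne_zero hn.ne'
  rw [Nat.succ_eq_add_one,
    Composition.sum_blocks_succ (fun l => h l.headI * (l.tail.map g).prod),
    PowerSeries.coeff_mul, Finset.Nat.sum_antidiagonal_succ]
  simp [h0, compositionSeries, Finset.mul_sum]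

theorem compositionSeries_mul_one_sub {R : Type*} [CommRing R] (g : ℕ → R) (g0 : g 0 = 0) :
    compositionSeries g * (1 - PowerSeries.mk g) = 1 := by
  have key : compositionSeries g = 1 + PowerSeries.mk g * compositionSeries g := by
    ext n
    rcases Nat.eq_zero_or_pos n with rfl | hn
    · have hb : ∀ β : Composition 0, β.blocks = [] := fun β => β.blocks_eq_nil.2 rfl
      have hc : Fintype.card (Composition 0) = 1 := by simp [composition_card]
      rw [map_add, PowerSeries.coeff_mul]
      simp [g0, compositionSeries, hb, hc]
    · rw [map_add, coeff_mk_mul_compositionSeries g g g0 hn, PowerSeries.coeff_one,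
        if_neg hn.ne', zero_add, compositionSeries, PowerSeries.coeff_mk]
      refine Finset.sum_congr rfl fun α _ => ?_
      have hne : α.blocks ≠ [] := fun h => hn.ne' (α.blocks_eq_nil.1 h)
      obtain ⟨a, t, ht⟩ := List.exists_cons_of_ne_nil hne
      simp [ht]
  linear_combination key

/-- The generating series of elementary symmetric polynomials, with the variables rescaled
by `c`. -/
theorem prod_one_add_C_mul_X {S : Type*} [CommRing S] (N : ℕ) (c : MvPolynomial (Fin N) S) :
    ∏ i : Fin N, (1 + PowerSeries.C (c * MvPolynomial.X i) * PowerSeries.X) =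
      PowerSeries.mk fun k => c ^ k * MvPolynomial.esymm (Fin N) S k := by
  ext1 k
  rw [Finset.prod_one_add, map_sum, PowerSeries.coeff_mk, MvPolynomial.esymm, Finset.mul_sum,
    Finset.powersetCard_eq_filter, Finset.sum_filter]
  refine Finset.sum_congr rfl fun t _ => ?_
  rw [Finset.prod_mul_distrib, ← map_prod, Finset.prod_const, PowerSeries.coeff_C_mul_X_pow,
    Finset.prod_mul_distrib, Finset.prod_const]
  by_cases h : t.card = k
  · simp [h]
  · simp [h, Ne.symm h]

theorem add_sum_mul_prod_eq {A : Type*} [CommRing A] (q d : A) :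
    ∀ {N : ℕ} (x W : Fin N → A),
      (∀ a, W a * (1 + q * x a) = x a * (d + (1 - q) * ∑ b, if b < a then W b else 0)) →
      (d + (1 - q) * ∑ a, W a) * ∏ a, (1 + q * x a) = d * ∏ a, (1 + x a)
  | 0, x, W, _ => by simp
  | N + 1, x, W, h => by
    have ih := add_sum_mul_prod_eq q d (fun a => x a.castSucc) (fun a => W a.castSucc)
      (fun a => by
        have := h a.castSucc
        simpa [Fin.sum_univ_castSucc, (Fin.castSucc_lt_last a).not_gt] using this)
    have hl := h (Fin.last N)
    simp only [Fin.sum_univ_castSucc, Fin.castSucc_lt_last, if_true, lt_irrefl, if_false,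
      add_zero] at hl
    rw [Fin.sum_univ_castSucc, Fin.prod_univ_castSucc, Fin.prod_univ_castSucc]
    linear_combination (1 + x (Fin.last N)) * ih +
      (1 - q) * (∏ a : Fin N, (1 + q * x a.castSucc)) * hl

/-- Telescoping of the linear system satisfied by the generating series of words
with given first letter. -/
theorem one_add_sum_mul_prod_eq {A : Type*} [CommRing A] (q : A) {N : ℕ} (x W : Fin N → A)
    (h : ∀ a, W a =
      x a * (1 + ∑ b, (if a = b then 0 else if a < b then q else 1) * W b)) :
    (1 + ∑ a, W a) * ∏ a, (1 + q * x a) = (1 + q * ∑ a, W a) * ∏ a, (1 + x a) := by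
  have := add_sum_mul_prod_eq q (1 + q * ∑ a, W a) x W fun a => by
    have hs : ∑ b, (if a = b then 0 else if a < b then q else 1) * W b =
        q * ∑ b, W b + (1 - q) * (∑ b, if b < a then W b else 0) - q * W a := by
      have hW : q * W a = ∑ b, if a = b then q * W b else 0 := by simp
      rw [hW, Finset.mul_sum, Finset.mul_sum, ← Finset.sum_add_distrib, ← Finset.sum_sub_distrib]
      refine Finset.sum_congr rfl fun b _ => ?_
      rcases lt_trichotomy a b with hab | rfl | hab
      · simp [hab, hab.ne, hab.not_gt]
      · simp
      · simp [hab, hab.ne', hab.not_gt]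
        ring
    have ha := h a
    rw [hs] at ha
    linear_combination ha
  linear_combination this

/-- The contribution of an edge with colours `a`, `b` to the weight of a colouring. -/
noncomputable def edgeWeight {N : ℕ} (a b : Fin N) : MvPolynomial (Fin N) (Polynomial ℤ) :=
  if a = b then 0 else if a < b then MvPolynomial.C Polynomial.X else 1

/-- The weight of a word, seen as a colouring of the path; it vanishes on improper colourings. -/
noncomputable def pathWeight {N n : ℕ} (κ : Fin (n + 1) → Fin N) :
    MvPolynomial (Fin N) (Polynomial ℤ) :=
  (∏ i : Fin n, edgeWeight (κ i.castSucc) (κ i.succ)) * ∏ i, MvPolynomial.X (κ i)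

theorem pathWeight_cons {N n : ℕ} (a : Fin N) (κ : Fin (n + 1) → Fin N) :
    pathWeight (Fin.cons a κ : Fin (n + 2) → Fin N) =
      edgeWeight a (κ 0) * MvPolynomial.X a * pathWeight κ := by
  simp only [pathWeight]
  rw [Fin.prod_univ_succ, Fin.prod_univ_succ (n := n + 1)]
  simp only [Fin.castSucc_zero, Fin.cons_zero, Fin.cons_succ, ← Fin.succ_castSucc]
  ring

theorem ascNum_pathGraph {N n : ℕ} (κ : Fin (n + 1) → Fin N) :
    ascNum (SimpleGraph.pathGraph (n + 1)) κ =
      (Finset.univ.filter fun i : Fin n => κ i.castSucc < κ i.succ).card := by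
  rw [ascNum, ← Fintype.card_subtype, ← Nat.card_eq_fintype_card]
  refine Nat.card_congr (Equiv.ofBijective
    (fun i => ⟨(i.1.castSucc, i.1.succ), Fin.castSucc_lt_succ,
      by simp [SimpleGraph.pathGraph_adj], i.2⟩) ⟨?_, ?_⟩).symm
  · rintro ⟨i, hi⟩ ⟨j, hj⟩ h
    simpa using h
  · rintro ⟨⟨a, b⟩, hab, hadj, hκ⟩
    rw [SimpleGraph.pathGraph_adj] at hadj
    simp only [Fin.lt_def] at hab hadj hκ
    have hv : a.val + 1 = b.val := by omega
    have ha : (⟨a.val, by omega⟩ : Fin n).castSucc = a := rfl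
    have hb : (⟨a.val, by omega⟩ : Fin n).succ = b := Fin.ext hv
    exact ⟨⟨⟨a.val, by omega⟩, by rw [ha, hb]; exact hκ⟩, by simp [ha, hb]⟩

theorem cqf_pathGraph_succ (N n : ℕ) :
    cqf (SimpleGraph.pathGraph (n + 1)) N = ∑ κ : Fin (n + 1) → Fin N, pathWeight κ := by
  classical
  rw [cqf, finsum_eq_sum_of_fintype]
  refine Finset.sum_congr rfl fun κ _ => ?_
  rw [finsum_eq_if, pathWeight]
  split_ifs with h
  · congr 1
    have h' : ∀ i : Fin n, κ i.castSucc ≠ κ i.succ := fun i =>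
      h _ _ (by simp [SimpleGraph.pathGraph_adj])
    simp only [edgeWeight, h', if_false]
    rw [Finset.prod_ite, ascNum_pathGraph]
    simp
  · push Not at h
    obtain ⟨i, j, hij, hκ⟩ := h
    have : ∃ k : Fin n, κ k.castSucc = κ k.succ := by
      rw [SimpleGraph.pathGraph_adj] at hij
      rcases hij with hij | hij
      · refine ⟨⟨i.val, by omega⟩, ?_⟩
        rwa [show (⟨i.val, by omega⟩ : Fin n).succ = j from Fin.ext hij]
      · refine ⟨⟨j.val, by omega⟩, ?_⟩
        rw [show (⟨j.val, by omega⟩ : Fin n).succ = i from Fin.ext hij]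
        exact hκ.symm
    obtain ⟨k, hk⟩ := this
    rw [Finset.prod_eq_zero (Finset.mem_univ k) (by simp [edgeWeight, hk]), zero_mul]

/-- The part of the chromatic quasisymmetric function of the path on `n + 1` vertices
coming from the colourings giving the first vertex colour `a`. -/
noncomputable def pathSumFrom {N : ℕ} (n : ℕ) (a : Fin N) :
    MvPolynomial (Fin N) (Polynomial ℤ) :=
  ∑ κ : Fin n → Fin N, pathWeight (Fin.cons a κ : Fin (n + 1) → Fin N)

theorem sum_word_succ {N n : ℕ} {M : Type*} [AddCommMonoid M] (f : (Fin (n + 1) → Fin N) → M) :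
    ∑ κ, f κ = ∑ a, ∑ κ : Fin n → Fin N, f (Fin.cons a κ) := by
  rw [← Fintype.sum_prod_type', ← (Fin.consEquiv fun _ => Fin N).sum_comp]
  rfl

theorem pathSumFrom_zero {N : ℕ} (a : Fin N) : pathSumFrom 0 a = MvPolynomial.X a := by
  simp [pathSumFrom, pathWeight]

theorem pathSumFrom_succ {N n : ℕ} (a : Fin N) :
    pathSumFrom (n + 1) a =
      MvPolynomial.X a * ∑ b, edgeWeight a b * pathSumFrom n b := by
  rw [pathSumFrom, sum_word_succ, Finset.mul_sum]
  refine Finset.sum_congr rfl fun b _ => ?_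
  rw [pathSumFrom, Finset.mul_sum, Finset.mul_sum]
  refine Finset.sum_congr rfl fun κ _ => ?_
  rw [pathWeight_cons, Fin.cons_zero]
  ring

/-- The generating series, over all lengths, of the words with first letter `a`. -/
noncomputable def pathSeriesFrom {N : ℕ} (a : Fin N) :
    PowerSeries (MvPolynomial (Fin N) (Polynomial ℤ)) :=
  PowerSeries.mk (fun n => pathSumFrom n a) * PowerSeries.X

theorem coeff_sum_pathSeriesFrom {N : ℕ} {n : ℕ} (hn : 0 < n) :
    PowerSeries.coeff n (∑ a : Fin N, pathSeriesFrom a) =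
      cqf (SimpleGraph.pathGraph n) N := by
  obtain ⟨n, rfl⟩ := Nat.exists_eq_succ_of_ne_zero hn.ne'
  rw [Nat.succ_eq_add_one, cqf_pathGraph_succ, sum_word_succ, map_sum]
  simp [pathSeriesFrom, PowerSeries.coeff_succ_mul_X, pathSumFrom]

theorem pathSeriesFrom_eq {N : ℕ} (a : Fin N) :
    pathSeriesFrom a = PowerSeries.C (MvPolynomial.X a) * PowerSeries.X *
      (1 + ∑ b, (if a = b then 0 else if a < b then PowerSeries.C (MvPolynomial.C Polynomial.X)
        else 1) * pathSeriesFrom b) := by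
  have hC : ∀ b, (if a = b then 0 else if a < b then
      PowerSeries.C (MvPolynomial.C Polynomial.X) else 1) =
        PowerSeries.C (edgeWeight a b) := fun b => by
    unfold edgeWeight
    split_ifs <;> simp
  simp only [hC]
  have : PowerSeries.mk (fun n => pathSumFrom n a) = PowerSeries.C (MvPolynomial.X a) *
      (1 + ∑ b, PowerSeries.C (edgeWeight a b) * pathSeriesFrom b) := by
    ext1 n
    rw [PowerSeries.coeff_mk, PowerSeries.coeff_C_mul, map_add, map_sum]
    simp only [PowerSeries.coeff_C_mul, pathSeriesFrom]
    cases n with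
    | zero => simp [pathSumFrom_zero]
    | succ n =>
      simp [PowerSeries.coeff_succ_mul_X, pathSumFrom_succ, PowerSeries.coeff_one]
  rw [pathSeriesFrom, this]
  ring

theorem qint_succ (m : ℕ) : qint (m + 1) = 1 + Polynomial.X * qint m := by
  rw [qint, Finset.sum_range_succ', qint, Finset.mul_sum, add_comm]
  simp [pow_succ']

theorem one_sub_X_mul_qint (m : ℕ) : (1 - Polynomial.X) * qint m = 1 - Polynomial.X ^ m :=
  mul_neg_geom_sum _ _

theorem one_add_sum_pathSeriesFrom_mul (N : ℕ) :
    (1 + ∑ a : Fin N, pathSeriesFrom a) * (1 - PowerSeries.mk fun k =>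
        MvPolynomial.C (Polynomial.X * qint (k - 1)) *
          MvPolynomial.esymm (Fin N) (Polynomial ℤ) k) =
      PowerSeries.mk fun k => MvPolynomial.esymm (Fin N) (Polynomial ℤ) k := by
  set q : MvPolynomial (Fin N) (Polynomial ℤ) := MvPolynomial.C Polynomial.X with hq
  set E := PowerSeries.mk fun k => MvPolynomial.esymm (Fin N) (Polynomial ℤ) k with hE
  set A := PowerSeries.mk fun k => MvPolynomial.C (Polynomial.X * qint (k - 1)) *
          MvPolynomial.esymm (Fin N) (Polynomial ℤ) k with hA
  have tel := one_add_sum_mul_prod_eq (PowerSeries.C q) _ _ (pathSeriesFrom_eq (N := N))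
  have h1 := prod_one_add_C_mul_X (S := Polynomial ℤ) N 1
  have h2 := prod_one_add_C_mul_X N q
  simp only [one_mul, one_pow] at h1
  simp only [map_mul, mul_assoc] at h2
  rw [h1, h2, ← hE] at tel
  have hden : (1 - PowerSeries.C q) * (1 - A) =
      PowerSeries.mk (fun k => q ^ k * MvPolynomial.esymm (Fin N) (Polynomial ℤ) k) -
        PowerSeries.C q * E := by
    have hexp : (1 - PowerSeries.C q) * (1 - A) = 1 - PowerSeries.C q -
        PowerSeries.C (1 - q) * A := by
      rw [map_sub, map_one]
      ring
    rw [hexp]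
    ext1 k
    simp only [LinearMap.map_sub, PowerSeries.coeff_C_mul, hA, hE, PowerSeries.coeff_mk,
      PowerSeries.coeff_one, PowerSeries.coeff_C]
    cases k with
    | zero => simp [qint]
    | succ k =>
      have := congrArg (MvPolynomial.C (σ := Fin N)) (one_sub_X_mul_qint k)
      simp only [map_mul, map_sub, map_one, map_pow, ← hq] at this
      simp only [Nat.add_eq_zero_iff, one_ne_zero, and_false, if_false, Nat.add_sub_cancel,
        map_mul, ← hq]
      linear_combination (-q * MvPolynomial.esymm (Fin N) (Polynomial ℤ) (k + 1)) * this
  have hne : (1 - PowerSeries.C q : PowerSeries (MvPolynomial (Fin N) (Polynomial ℤ))) ≠ 0 := by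
    rw [sub_ne_zero, ← map_one PowerSeries.C, Ne, PowerSeries.C_injective.eq_iff, hq,
      ← map_one MvPolynomial.C, (MvPolynomial.C_injective _ _).eq_iff]
    exact fun h => by simpa using congrArg (Polynomial.eval 0) h
  refine mul_left_cancel₀ hne ?_
  linear_combination (1 + ∑ a : Fin N, pathSeriesFrom a) * hden + tel

theorem esymmProd_weight_cons (N a : ℕ) (t : List ℕ) :
    MvPolynomial.C (Polynomial.X ^ t.length * qint a * (t.map fun b => qint (b - 1)).prod) *
        esymmProd N (a :: t) =
      MvPolynomial.C (qint a) * MvPolynomial.esymm (Fin N) (Polynomial ℤ) a *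
        (t.map fun k => MvPolynomial.C (Polynomial.X * qint (k - 1)) *
          MvPolynomial.esymm (Fin N) (Polynomial ℤ) k).prod := by
  simp only [esymmProd, List.map_cons, List.prod_cons, List.prod_map_mul, map_mul, map_pow,
    List.map_const', List.prod_replicate, map_list_prod, List.map_map, Function.comp_def]
  ring

/-- the chromatic quasisymmetric function of the path `P_n` is
`X_{P_n}(x;q) = Σ_{α ⊨ n} q^{ℓ(α)-1} [α_1]_q [α_2-1]_q ⋯ [α_m-1]_q e_{sort(α)}`
(in every number `N` of variables). -/
theorem cqf_pathGraph (n : ℕ) (hn : 0 < n) (N : ℕ) :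
    cqf (SimpleGraph.pathGraph n) N =
      ∑ α : Composition n,
        MvPolynomial.C (Polynomial.X ^ (α.length - 1) * qint α.blocks.headI *
            (α.blocks.tail.map (fun b => qint (b - 1))).prod) *
          esymmProd N α.blocks := by
  set g : ℕ → MvPolynomial (Fin N) (Polynomial ℤ) := fun k =>
    MvPolynomial.C (Polynomial.X * qint (k - 1)) *
      MvPolynomial.esymm (Fin N) (Polynomial ℤ) k with hg
  set h : ℕ → MvPolynomial (Fin N) (Polynomial ℤ) := fun k =>
    MvPolynomial.C (qint k) * MvPolynomial.esymm (Fin N) (Polynomial ℤ) k with hh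
  have hE : PowerSeries.mk (fun k => MvPolynomial.esymm (Fin N) (Polynomial ℤ) k) =
      1 - PowerSeries.mk g + PowerSeries.mk h := by
    ext1 k
    cases k with
    | zero => simp [hg, hh, qint]
    | succ k =>
      simp [hg, hh, qint_succ, PowerSeries.coeff_one]
      ring
  have hW := one_add_sum_pathSeriesFrom_mul N
  have hG := compositionSeries_mul_one_sub g (by simp [hg, qint])
  have key : ∑ a : Fin N, pathSeriesFrom a = PowerSeries.mk h * compositionSeries g := by
    rw [hE] at hW
    linear_combination compositionSeries g * hW - (∑ a : Fin N, pathSeriesFrom a) * hG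
  rw [← coeff_sum_pathSeriesFrom hn, key,
    coeff_mk_mul_compositionSeries h g (by simp [hh, qint]) hn]
  refine Finset.sum_congr rfl fun α _ => ?_
  have hne : α.blocks ≠ [] := fun h => hn.ne' (α.blocks_eq_nil.1 h)
  obtain ⟨a, t, ht⟩ := List.exists_cons_of_ne_nil hne
  rw [← α.blocks_length, ht]
  exact (esymmProd_weight_cons N a t).symm
end

section
/- The chromatic quasisymmetric function of the K-chain K_{a,b} (two complete graphs of sizes a and b glued at a single vertex, with n = a+b-1 vertices) is X_{K_{ab}}(x;q) = [a-1]_q! [b-1]_q! · Σ_{k=max(a,b)}^{n} q^{n-k} [2k-n]_q · e_{(k, n-k)}. In particular it is e-positive and e-unimodal. -/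
noncomputable def qfact : ℕ → Polynomial ℤ
  | 0 => 1
  | n + 1 => qint (n + 1) * qfact n

/-- The K-chain `K_{ab}` on `a + b - 1` vertices: a complete graph on the first `a`
vertices `{1,…,a}` and a complete graph on the last `b` vertices `{a,…,a+b-1}`, glued at
the vertex `a`. -/
def KChain2 (a b : ℕ) : SimpleGraph (Fin (a + b - 1)) :=
  SimpleGraph.fromRel (fun i j =>
    ((i : ℕ) < a ∧ (j : ℕ) < a) ∨ (a ≤ (i : ℕ) + 1 ∧ a ≤ (j : ℕ) + 1))

/-- The factor contributed to the weight of a colouring by an edge whose smaller endpoint is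
coloured `x` and whose larger endpoint is coloured `y`. -/
def pairWeight {A : Type*} [CommRing A] {N : ℕ} (q : A) (x y : Fin N) : A :=
  if x < y then q else if x = y then 0 else 1

/-- The generating polynomial of the elementary symmetric functions of `w`. -/
noncomputable def genE {A : Type*} [CommRing A] {N : ℕ} (w : Fin N → A) : Polynomial A :=
  ∏ i, (1 + Polynomial.C (w i) * Polynomial.X)

section Generating

variable {A : Type*} [CommRing A] {N : ℕ}

theorem coeff_zero_genE (w : Fin N → A) : (genE w).coeff 0 = 1 := by
  simp [genE, Polynomial.coeff_zero_prod]

theorem coeff_genE_mul (q : A) (w : Fin N → A) (m : ℕ) :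
    (genE fun i => q * w i).coeff m = q ^ m * (genE w).coeff m := by
  have h : genE (fun i => q * w i) = (genE w).comp (Polynomial.C q * Polynomial.X) := by
    simp only [genE, Polynomial.prod_comp]
    refine Finset.prod_congr rfl fun i _ => ?_
    simp [mul_assoc, mul_left_comm]
  rw [h, Polynomial.comp_C_mul_X_coeff, mul_comm]

theorem coeff_genE (w : Fin N → A) (m : ℕ) :
    (genE w).coeff m = ∑ s ∈ Finset.powersetCard m Finset.univ, ∏ i ∈ s, w i := by
  have h (s : Finset (Fin N)) : ∏ i ∈ s, (Polynomial.C (w i) * Polynomial.X) =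
      Polynomial.C (∏ i ∈ s, w i) * Polynomial.X ^ s.card := by
    rw [Finset.prod_mul_distrib, Finset.prod_const, map_prod]
  simp only [genE, Finset.prod_one_add, h, Polynomial.finsetSum_coeff,
    Polynomial.coeff_C_mul, Polynomial.coeff_X_pow]
  rw [Finset.powersetCard_eq_filter, Finset.sum_filter]
  refine Finset.sum_congr rfl fun s _ => ?_
  by_cases hs : s.card = m
  · simp [hs]
  · simp [hs, Ne.symm hs]

/-- The sum over the colour of the glued vertex of the contributions of two cliques with `m`
and `l` further vertices, up to `q`-factorials. -/
noncomputable def gluedSum (q : A) (w : Fin N → A) (m l : ℕ) : A :=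
  ∑ c, w c * ((genE fun i => pairWeight q i c * w i).coeff m *
    (genE fun i => pairWeight q c i * w i).coeff l)

theorem coeff_coeff_C_mul_map_C (p r : Polynomial A) (m l : ℕ) :
    ((Polynomial.C p * r.map Polynomial.C).coeff l).coeff m = p.coeff m * r.coeff l := by
  simp [Polynomial.coeff_C_mul, Polynomial.coeff_map]

theorem prod_ite_lt_gt {B : Type*} [CommRing B] (f g : Fin N → B) (c : Fin N) :
    (∏ i with i < c, f i) * ∏ i with c < i, g i =
      ∏ i, if i < c then f i else if c < i then g i else 1 := by
  rw [Finset.prod_filter, Finset.prod_filter, ← Finset.prod_mul_distrib]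
  refine Finset.prod_congr rfl fun i _ => ?_
  rcases lt_trichotomy i c with h | h | h
  · simp [h, h.not_gt]
  · simp [h]
  · simp [h, h.not_gt]

theorem telescope_genE (q : A) (w : Fin N → A) :
    Polynomial.C (Polynomial.C (q - 1)) * (Polynomial.C Polynomial.X - Polynomial.X) *
      ∑ c, Polynomial.C (Polynomial.C (w c)) *
        (Polynomial.C (genE fun i => pairWeight q i c * w i) *
          (genE fun i => pairWeight q c i * w i).map Polynomial.C) =
    Polynomial.C (genE fun i => q * w i) * (genE w).map Polynomial.C -
      Polynomial.C (genE w) * (genE fun i => q * w i).map Polynomial.C := by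
  set f : Fin N → Polynomial (Polynomial A) := fun i =>
    Polynomial.C (1 + Polynomial.C (q * w i) * Polynomial.X) *
      (1 + Polynomial.C (w i) * Polynomial.X : Polynomial A).map Polynomial.C with hf
  set g : Fin N → Polynomial (Polynomial A) := fun i =>
    Polynomial.C (1 + Polynomial.C (w i) * Polynomial.X) *
      (1 + Polynomial.C (q * w i) * Polynomial.X : Polynomial A).map Polynomial.C with hg
  have key := Finset.prod_add_ordered Finset.univ g (fun i => f i - g i)
  simp only [add_sub_cancel] at key
  have h1 : ∏ i, f i = Polynomial.C (genE fun i => q * w i) * (genE w).map Polynomial.C := by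
    simp only [hf, genE, Finset.prod_mul_distrib, map_prod, Polynomial.map_prod]
  have h2 : ∏ i, g i = Polynomial.C (genE w) * (genE fun i => q * w i).map Polynomial.C := by
    simp only [hg, genE, Finset.prod_mul_distrib, map_prod, Polynomial.map_prod]
  rw [← h1, ← h2, key, add_sub_cancel_left, Finset.mul_sum]
  refine Finset.sum_congr rfl fun c _ => ?_
  rw [mul_assoc (f c - g c), prod_ite_lt_gt]
  have h3 : f c - g c = Polynomial.C (Polynomial.C (q - 1)) *
      (Polynomial.C Polynomial.X - Polynomial.X) * Polynomial.C (Polynomial.C (w c)) := by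
    simp only [hf, hg, Polynomial.map_add, Polynomial.map_mul, Polynomial.map_one,
      Polynomial.map_C, Polynomial.map_X, map_add, map_mul, map_one, map_sub]
    ring
  rw [h3, mul_assoc (_ * _) (Polynomial.C (Polynomial.C (w c)))]
  congr 2
  simp only [genE, map_prod, Polynomial.map_prod, ← Finset.prod_mul_distrib]
  refine Finset.prod_congr rfl fun i _ => ?_
  rcases lt_trichotomy i c with h | h | h
  · simp [hf, pairWeight, h, h.not_gt, h.ne']
  · simp [h, pairWeight]
  · simp [hg, pairWeight, h, h.not_gt, h.ne']

theorem coeff_telescope (q : A) (w : Fin N → A) (m l : ℕ) :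
    (q - 1) * ((if m = 0 then 0 else gluedSum q w (m - 1) l) -
      (if l = 0 then 0 else gluedSum q w m (l - 1))) =
      (q ^ m - q ^ l) * ((genE w).coeff m * (genE w).coeff l) := by
  have h := congrArg (fun p => (p.coeff l).coeff m) (telescope_genE q w)
  simp only [Polynomial.coeff_sub, coeff_coeff_C_mul_map_C, coeff_genE_mul] at h
  set S := ∑ c, Polynomial.C (Polynomial.C (w c)) *
        (Polynomial.C (genE fun i => pairWeight q i c * w i) *
          (genE fun i => pairWeight q c i * w i).map Polynomial.C) with hS
  have hc (i j : ℕ) : (S.coeff j).coeff i = gluedSum q w i j := by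
    simp only [hS, Polynomial.finsetSum_coeff, Polynomial.coeff_C_mul, gluedSum,
      Polynomial.coeff_map, Polynomial.coeff_mul_C]
  rw [mul_assoc, Polynomial.coeff_C_mul, Polynomial.coeff_C_mul,
    sub_mul (Polynomial.C (Polynomial.X : Polynomial A)),
    Polynomial.coeff_sub, Polynomial.coeff_sub, Polynomial.coeff_C_mul] at h
  have h1 : (Polynomial.X * S.coeff l).coeff m =
      if m = 0 then 0 else gluedSum q w (m - 1) l := by
    cases m with
    | zero => simp
    | succ m => simp [Polynomial.coeff_X_mul, hc]
  have h2 : ((Polynomial.X * S).coeff l).coeff m =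
      if l = 0 then 0 else gluedSum q w m (l - 1) := by
    cases l with
    | zero => simp
    | succ l => simp [Polynomial.coeff_X_mul, hc]
  rw [h1, h2] at h
  rw [h]
  ring

theorem sub_one_mul_gluedSum (q : A) (w : Fin N → A) (m l : ℕ) :
    (q - 1) * gluedSum q w m l = ∑ k ∈ Finset.Icc (m + 1) (m + 1 + l),
      (q ^ k - q ^ (m + 1 + l - k)) * ((genE w).coeff k * (genE w).coeff (m + 1 + l - k)) := by
  induction l generalizing m with
  | zero => simpa using coeff_telescope q w (m + 1) 0
  | succ l ih =>
    have h := coeff_telescope q w (m + 1) (l + 1)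
    have ih' := ih (m + 1)
    have e : m + 1 + 1 + l = m + 1 + (l + 1) := by omega
    simp only [Nat.add_eq_zero_iff, one_ne_zero, and_false, if_false, Nat.add_sub_cancel] at h
    rw [e] at ih'
    rw [← Finset.add_sum_Ioc_eq_sum_Icc (by omega), ← Finset.Icc_add_one_left_eq_Ioc, ← ih']
    simp only [Nat.add_sub_cancel_left]
    linear_combination h

theorem sub_one_mul_gluedSum_zero (q : A) (w : Fin N → A) (l : ℕ) :
    (q - 1) * gluedSum q w 0 l = (q ^ (l + 1) - 1) * (genE w).coeff (l + 1) := by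
  have h := coeff_telescope q w 0 (l + 1)
  simp [coeff_zero_genE] at h
  linear_combination -h

theorem sub_one_mul_gluedSum_max (q : A) (w : Fin N → A) (m l : ℕ) :
    (q - 1) * gluedSum q w m l = ∑ k ∈ Finset.Icc (max (m + 1) (l + 1)) (m + 1 + l),
      (q ^ k - q ^ (m + 1 + l - k)) * ((genE w).coeff k * (genE w).coeff (m + 1 + l - k)) := by
  have hsub : Finset.Icc (max (m + 1) (l + 1)) (m + 1 + l) ⊆ Finset.Icc (m + 1) (m + 1 + l) :=
    Finset.Icc_subset_Icc_left (le_max_left _ _)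
  rw [sub_one_mul_gluedSum, ← Finset.sum_sdiff hsub, add_eq_right]
  refine Finset.sum_involution (fun k _ => m + 1 + l - k) ?_ ?_ ?_ ?_
  · intro k hk
    simp only [Finset.mem_sdiff, Finset.mem_Icc] at hk
    rw [Nat.sub_sub_self hk.1.2]
    ring
  · intro k hk hne he
    rw [he, sub_self, zero_mul] at hne
    exact hne rfl
  · intro k hk
    simp only [Finset.mem_sdiff, Finset.mem_Icc] at hk ⊢
    omega
  · intro k hk
    simp only [Finset.mem_sdiff, Finset.mem_Icc] at hk
    omega

/-- The sum over the colourings of a clique on `m` vertices. -/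
def cliqueSum (q : A) (w : Fin N → A) (m : ℕ) : A :=
  ∑ κ : Fin m → Fin N,
    (∏ i, ∏ j, if i < j then pairWeight q (κ i) (κ j) else 1) * ∏ i, w (κ i)

theorem cliqueSum_succ (q : A) (w : Fin N → A) (m : ℕ) :
    cliqueSum q w (m + 1) =
      ∑ c, w c * cliqueSum q (fun i => pairWeight q c i * w i) m := by
  simp only [cliqueSum, Finset.mul_sum]
  rw [← Fintype.sum_prod_type', ← (Fin.consEquiv fun _ : Fin (m + 1) => Fin N).sum_comp]
  refine Finset.sum_congr rfl fun κ _ => ?_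
  simp [Fin.consEquiv, Fin.prod_univ_succ, Finset.prod_mul_distrib]
  ring

theorem cliqueSum_eq [IsDomain A] (q : A) (hq : q ≠ 1) (w : Fin N → A) (m : ℕ) :
    cliqueSum q w m =
      (∏ i ∈ Finset.range m, ∑ j ∈ Finset.range (i + 1), q ^ j) * (genE w).coeff m := by
  induction m generalizing w with
  | zero => simp [cliqueSum, coeff_zero_genE]
  | succ m ih =>
    have h : gluedSum q w 0 m =
        (∑ j ∈ Finset.range (m + 1), q ^ j) * (genE w).coeff (m + 1) := by
      apply mul_left_cancel₀ (sub_ne_zero.2 hq)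
      rw [sub_one_mul_gluedSum_zero, ← mul_assoc, mul_geom_sum]
    rw [cliqueSum_succ, Finset.prod_range_succ, mul_assoc, ← h, gluedSum, Finset.mul_sum]
    refine Finset.sum_congr rfl fun c _ => ?_
    rw [ih, coeff_zero_genE]
    ring

end Generating

theorem cqf_eq_sum {n : ℕ} (G : SimpleGraph (Fin n)) [DecidableRel G.Adj] (N : ℕ) :
    cqf G N = ∑ κ : Fin n → Fin N,
      (∏ i, ∏ j, if i < j ∧ G.Adj i j then
        pairWeight (MvPolynomial.C Polynomial.X : MvPolynomial (Fin N) (Polynomial ℤ)) (κ i) (κ j)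
        else 1) * ∏ i, MvPolynomial.X (κ i) := by
  classical
  rw [cqf, finsum_eq_sum_of_fintype]
  refine Finset.sum_congr rfl fun κ _ => ?_
  rw [finsum_eq_if]
  rw [← Finset.prod_product']
  split_ifs with h
  · congr 1
    rw [ascNum, Nat.card_eq_fintype_card, Fintype.card_subtype, map_pow, ← Finset.prod_const,
      Finset.prod_filter, Finset.univ_product_univ]
    refine Finset.prod_congr rfl fun p _ => ?_
    by_cases hp : p.1 < p.2 ∧ G.Adj p.1 p.2
    · have := h _ _ hp.2
      simp [hp, pairWeight, this]
    · rw [if_neg hp, if_neg (fun h' => hp ⟨h'.1, h'.2.1⟩)]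
  · push Not at h
    obtain ⟨i, j, hij, he⟩ := h
    symm
    wlog hlt : i < j generalizing i j
    · exact this j i hij.symm he.symm (lt_of_le_of_ne (not_lt.1 hlt) hij.ne')
    rw [Finset.prod_eq_zero (i := (i, j)) (by simp), zero_mul]
    simp [hlt, hij, pairWeight, he]

theorem KChain2_lt_and_adj_iff (m l : ℕ) (i j : Fin (m + 1 + (l + 1) - 1)) :
    (i < j ∧ (KChain2 (m + 1) (l + 1)).Adj i j) ↔
      (i : ℕ) < j ∧ ((j : ℕ) < m + 1 ∨ m ≤ (i : ℕ)) := by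
  have h : (KChain2 (m + 1) (l + 1)).Adj i j ↔ i ≠ j ∧
      ((((i : ℕ) < m + 1 ∧ (j : ℕ) < m + 1) ∨ (m + 1 ≤ (i : ℕ) + 1 ∧ m + 1 ≤ (j : ℕ) + 1)) ∨
      (((j : ℕ) < m + 1 ∧ (i : ℕ) < m + 1) ∨ (m + 1 ≤ (j : ℕ) + 1 ∧ m + 1 ≤ (i : ℕ) + 1))) :=
    Iff.rfl
  rw [h, Fin.lt_def, Ne, Fin.ext_iff]
  omega

theorem sum_eq_sum_append_snoc {A : Type*} [AddCommMonoid A] {m l N : ℕ}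
    (F : (Fin (m + 1 + l) → Fin N) → A) :
    ∑ κ, F κ = ∑ c, ∑ u : Fin m → Fin N, ∑ v : Fin l → Fin N,
      F (Fin.append (Fin.snoc u c : Fin (m + 1) → Fin N) v) := by
  rw [← (Fin.appendEquiv (m + 1) l).sum_comp, Fintype.sum_prod_type,
    ← (Fin.snocEquiv fun _ : Fin (m + 1) => Fin N).sum_comp, Fintype.sum_prod_type]
  rfl

theorem prod_append_snoc {A : Type*} [CommRing A] {m l N : ℕ} (q : A) (w : Fin N → A)
    (c : Fin N) (u : Fin m → Fin N) (v : Fin l → Fin N) :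
    (∏ i : Fin (m + 1 + l), ∏ j : Fin (m + 1 + l),
        if (i : ℕ) < j ∧ ((j : ℕ) < m + 1 ∨ m ≤ (i : ℕ)) then
          pairWeight q (Fin.append (Fin.snoc u c : Fin (m + 1) → Fin N) v i)
            (Fin.append (Fin.snoc u c : Fin (m + 1) → Fin N) v j) else 1) *
      ∏ i, w (Fin.append (Fin.snoc u c : Fin (m + 1) → Fin N) v i) =
    w c * (((∏ i, ∏ j, if i < j then pairWeight q (u i) (u j) else 1) *
        ∏ i, pairWeight q (u i) c * w (u i)) *
      ((∏ i, ∏ j, if i < j then pairWeight q (v i) (v j) else 1) *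
        ∏ i, pairWeight q c (v i) * w (v i))) := by
  have h1 (i : Fin m) : ¬ m ≤ (i : ℕ) := by omega
  have h3 (i : Fin m) : ¬ m < (i : ℕ) := by omega
  have h4 (j : Fin l) : m < m + 1 + (j : ℕ) := by omega
  have h5 (j : Fin l) : ¬ m + 1 + (j : ℕ) < m := by omega
  have h6 (j : Fin l) (i : Fin m) : ¬ m + 1 + (j : ℕ) < i := by omega
  have h7 (j : Fin l) : m ≤ m + 1 + (j : ℕ) := by omega
  simp only [Fin.prod_univ_add, Fin.prod_univ_castSucc, Fin.append_left, Fin.append_right,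
    Fin.snoc_castSucc, Fin.snoc_last, Fin.val_castAdd, Fin.val_natAdd, Fin.val_castSucc,
    Fin.val_last, h1, h3, h4, h5, h6, h7, Fin.is_lt, Fin.lt_def, Finset.prod_mul_distrib,
    Finset.prod_const_one, true_or, and_true, le_refl, false_or, and_false,
    if_true, if_false, lt_irrefl, mul_one, one_mul, add_lt_add_iff_left, add_lt_iff_neg_left,
    not_lt_zero]
  ring

theorem prod_range_qint (m N : ℕ) :
    ∏ i ∈ Finset.range m, ∑ j ∈ Finset.range (i + 1),
      (MvPolynomial.C Polynomial.X : MvPolynomial (Fin N) (Polynomial ℤ)) ^ j =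
    MvPolynomial.C (qfact m) := by
  induction m with
  | zero => simp [qfact]
  | succ m ih => rw [Finset.prod_range_succ, ih, qfact, map_mul, qint, map_sum, mul_comm]; simp

theorem C_X_ne_one (N : ℕ) :
    (MvPolynomial.C Polynomial.X : MvPolynomial (Fin N) (Polynomial ℤ)) ≠ 1 := by
  rw [← MvPolynomial.C_1, Ne, MvPolynomial.C_inj]
  exact Polynomial.X_ne_C 1

theorem cqf_KChain2_eq_gluedSum (m l N : ℕ) :
    cqf (KChain2 (m + 1) (l + 1)) N =
      MvPolynomial.C (qfact m * qfact l) *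
        gluedSum (MvPolynomial.C Polynomial.X) MvPolynomial.X m l := by
  classical
  have hR : MvPolynomial.C (qfact m * qfact l) *
      gluedSum (MvPolynomial.C Polynomial.X) MvPolynomial.X m l =
      ∑ c : Fin N, MvPolynomial.X c *
        (cliqueSum (MvPolynomial.C Polynomial.X)
          (fun i => pairWeight (MvPolynomial.C Polynomial.X) i c * MvPolynomial.X i) m *
        cliqueSum (MvPolynomial.C Polynomial.X)
          (fun i => pairWeight (MvPolynomial.C Polynomial.X) c i * MvPolynomial.X i) l) := by
    simp only [cliqueSum_eq _ (C_X_ne_one N), prod_range_qint, gluedSum, Finset.mul_sum, map_mul]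
    refine Finset.sum_congr rfl fun c _ => ?_
    ring
  rw [hR, cqf_eq_sum]
  simp only [KChain2_lt_and_adj_iff]
  refine (sum_eq_sum_append_snoc (m := m) (l := l) _).trans ?_
  refine Finset.sum_congr rfl fun c _ => ?_
  rw [cliqueSum, cliqueSum, Finset.sum_mul_sum, Finset.mul_sum]
  refine Finset.sum_congr rfl fun u _ => ?_
  rw [Finset.mul_sum]
  refine Finset.sum_congr rfl fun v _ => ?_
  exact prod_append_snoc _ _ c u v

theorem sub_one_mul_C_qint (k d N : ℕ) (h : d ≤ k) :
    (MvPolynomial.C Polynomial.X - 1 : MvPolynomial (Fin N) (Polynomial ℤ)) *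
      MvPolynomial.C (Polynomial.X ^ d * qint (k - d)) =
    MvPolynomial.C Polynomial.X ^ k - MvPolynomial.C Polynomial.X ^ d := by
  have : (Polynomial.X - 1 : Polynomial ℤ) * (Polynomial.X ^ d * qint (k - d)) =
      Polynomial.X ^ k - Polynomial.X ^ d := by
    rw [mul_left_comm, qint, mul_geom_sum, mul_sub, ← pow_add, Nat.add_sub_cancel' h, mul_one]
  simpa using congrArg (MvPolynomial.C (σ := Fin N)) this

/-- for `a, b ≥ 2` and `n = a + b - 1`,
`X_{K_{ab}}(x;q) = [a-1]_q! [b-1]_q! Σ_{k = max(a,b)}^{n} q^{n-k} [2k-n]_q e_{(k,n-k)}`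
(in every number `N` of variables). -/
theorem cqf_KChain2 (a b : ℕ) (ha : 2 ≤ a) (hb : 2 ≤ b) (N : ℕ) :
    cqf (KChain2 a b) N =
      MvPolynomial.C (qfact (a - 1) * qfact (b - 1)) *
        ∑ k ∈ Finset.Icc (max a b) (a + b - 1),
          MvPolynomial.C (Polynomial.X ^ (a + b - 1 - k) * qint (2 * k - (a + b - 1))) *
            (MvPolynomial.esymm (Fin N) (Polynomial ℤ) k *
              MvPolynomial.esymm (Fin N) (Polynomial ℤ) (a + b - 1 - k)) := by
  obtain ⟨m, rfl⟩ : ∃ m, a = m + 1 := ⟨a - 1, by omega⟩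
  obtain ⟨l, rfl⟩ : ∃ l, b = l + 1 := ⟨b - 1, by omega⟩
  rw [cqf_KChain2_eq_gluedSum]
  simp only [Nat.add_sub_cancel, ← add_assoc]
  congr 1
  apply mul_left_cancel₀ (sub_ne_zero.2 (C_X_ne_one N))
  rw [sub_one_mul_gluedSum_max, Finset.mul_sum]
  refine Finset.sum_congr rfl fun k hk => ?_
  rw [Finset.mem_Icc] at hk
  have e : 2 * k - (m + 1 + l) = k - (m + 1 + l - k) := by omega
  rw [e, ← mul_assoc (_ - 1), sub_one_mul_C_qint _ _ _ (by omega), coeff_genE, coeff_genE]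
  rfl
end
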